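/- Let τ̄ ∈ ℍⁿ be a G-independent tuple. Then the number of types of tuples τ̄′, realisable in models of Th(j) + StandardFibres, satisfying j′(τ̄′) = j(τ̄), is either finite or exactly 2^{ℵ₀}. -/

import Mathlib

set_option synthInstance.maxHeartbeats 800000
set_option maxHeartbeats 1600000
noncomputable section
open UpperHalfPlane Matrix MatrixGroups Classical

namespace JPaper

/-! ### The group `G = GL₂⁺(ℚ)` modulo scalars and its action on `ℍ` -/

/-- `GL₂⁺(ℚ)`, the group of 2×2 rational matrices with positive determinant. -/
abbrev GL2QPos : Type := Matrix.GLPos (Fin 2) ℚ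

lemma map_mem_glpos (g : GL2QPos) :
    (Matrix.GeneralLinearGroup.map (algebraMap ℚ ℝ) : GL (Fin 2) ℚ →* GL (Fin 2) ℝ) g ∈
      Matrix.GLPos (Fin 2) ℝ := by
  have hg := g.2
  rw [Matrix.mem_glpos] at hg ⊢
  rw [Matrix.GeneralLinearGroup.val_det_apply] at hg ⊢
  show (0:ℝ) < Matrix.det _
  have : ((Matrix.GeneralLinearGroup.map (algebraMap ℚ ℝ) (g : GL (Fin 2) ℚ) :
      GL (Fin 2) ℝ) : Matrix (Fin 2) (Fin 2) ℝ) = ((g : GL (Fin 2) ℚ) :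
      Matrix (Fin 2) (Fin 2) ℚ).map (algebraMap ℚ ℝ) := rfl
  rw [this, ← RingHom.mapMatrix_apply, ← RingHom.map_det]
  simpa using (Rat.cast_pos (K := ℝ)).mpr hg

/-- The homomorphism `GL₂⁺(ℚ) →* GL₂⁺(ℝ)` induced by `ℚ ⊆ ℝ`. -/
def toGLPosR : GL2QPos →* Matrix.GLPos (Fin 2) ℝ :=
  MonoidHom.codRestrict
    ((Matrix.GeneralLinearGroup.map (algebraMap ℚ ℝ)).comp (Matrix.GLPos (Fin 2) ℚ).subtype)
    (Matrix.GLPos (Fin 2) ℝ) (fun g => map_mem_glpos g)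

/-- `G := GL₂⁺(ℚ)ᵃᵈ`, i.e. `GL₂⁺(ℚ)` modulo its centre (the scalar matrices). -/
abbrev GQ : Type := GL2QPos ⧸ Subgroup.center GL2QPos

/-- The action of an element of `G = GL₂⁺(ℚ)` modulo scalars on the upper half plane,
via a choice of representative (the centre acts trivially on `ℍ`, so this recovers the
natural action by Möbius transformations). -/
def gqSmul (g : GQ) (τ : ℍ) : ℍ := toGLPosR g.out • τ

/-- The image of `SL₂(ℤ)` in `GL₂⁺(ℚ)`. -/
def sl2ZtoGLQ (γ : Matrix.SpecialLinearGroup (Fin 2) ℤ) : GL2QPos :=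
  ⟨Matrix.SpecialLinearGroup.toGL
      (Matrix.SpecialLinearGroup.map (Int.castRingHom ℚ) γ), by
    rw [Matrix.mem_glpos, Matrix.GeneralLinearGroup.val_det_apply]
    show (0:ℚ) < Matrix.det _
    have : ((Matrix.SpecialLinearGroup.toGL
        (Matrix.SpecialLinearGroup.map (Int.castRingHom ℚ) γ) : GL (Fin 2) ℚ) :
        Matrix (Fin 2) (Fin 2) ℚ).det = 1 :=
      (Matrix.SpecialLinearGroup.map (Int.castRingHom ℚ) γ).2
    rw [this]; norm_num⟩

/-- The image of `SL₂(ℤ)` in `G = GL₂⁺(ℚ)` modulo scalars. -/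
def sl2ZtoGQ (γ : Matrix.SpecialLinearGroup (Fin 2) ℤ) : GQ :=
  QuotientGroup.mk (sl2ZtoGLQ γ)

/-! ### The modular `j`-function and special points -/

/-- The classical modular `j`-function on the upper half plane, defined via the
Eisenstein series `g₂, g₃` of the lattice `ℤτ + ℤ`. -/
def jFunction (τ : ℍ) : ℂ :=
  let g2 : ℂ := 60 * ∑' p : ℤ × ℤ,
    if p = 0 then 0 else (((p.1 : ℂ) * (τ : ℂ) + (p.2 : ℂ)) ^ 4)⁻¹
  let g3 : ℂ := 140 * ∑' p : ℤ × ℤ,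
    if p = 0 then 0 else (((p.1 : ℂ) * (τ : ℂ) + (p.2 : ℂ)) ^ 6)⁻¹
  1728 * g2 ^ 3 / (g2 ^ 3 - 27 * g3 ^ 2)

/-- A point of `ℍ` is special (a CM point) if it is fixed by some nontrivial element
of `G = GL₂⁺(ℚ)` modulo scalars. -/
def IsSpecial (τ : ℍ) : Prop := ∃ g : GQ, g ≠ 1 ∧ gqSmul g τ = τ

/-- The set of special points of `ℍ`. -/
def SpecialSet : Set ℍ := {τ | IsSpecial τ}

/-- The set `j(S) ⊆ ℂ` of singular moduli, i.e. `j`-values of special points. -/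
def jSpecialValues : Set ℂ := jFunction '' SpecialSet

/-- The subfield `ℚ(j(S))` of `ℂ` generated by the singular moduli. -/
def QjS : Subfield ℂ := Subfield.closure jSpecialValues

/-- An integral matrix is primitive if the gcd of its entries is 1. -/
def IsPrimitiveIntMatrix (A : Matrix (Fin 2) (Fin 2) ℤ) : Prop :=
  Int.gcd (Int.gcd (A 0 0) (A 0 1)) (Int.gcd (A 1 0) (A 1 1)) = 1

/-- `G_N`: the set of elements of `G` which, after multiplying through by an integer to
clear denominators in all entries, have determinant `N`. -/
def GQdet (N : ℕ) : Set GQ :=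
  {g | ∃ A : Matrix (Fin 2) (Fin 2) ℤ, IsPrimitiveIntMatrix A ∧ A.det = (N : ℤ) ∧
    ∃ c : ℚ, ((g.out : GL (Fin 2) ℚ) : Matrix (Fin 2) (Fin 2) ℚ) =
      c • A.map (fun x => (x : ℚ))}

/-- The `N`-th classical modular polynomial `Φ_N ∈ ℤ[X,Y]`, characterised by the property
that `Φ_N(z,w) = 0` iff `z` and `w` are the `j`-invariants of elliptic curves related by a
cyclic `N`-isogeny, i.e. iff `w = j(gτ)`, `z = j(τ)` for some `τ ∈ ℍ` and `g ∈ G_N`. -/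
def modularPoly (N : ℕ) : MvPolynomial (Fin 2) ℤ :=
  if h : ∃ P : MvPolynomial (Fin 2) ℤ, P ≠ 0 ∧ ∀ z w : ℂ,
      (MvPolynomial.aeval ![z, w]) P = 0 ↔
        ∃ (τ : ℍ) (g : GQ), g ∈ GQdet N ∧ jFunction τ = z ∧ jFunction (gqSmul g τ) = w
  then h.choose else 0


/-! ### The two-sorted language of the `j`-function and its models -/

open FirstOrder FirstOrder.Language

/-- Function symbols of the two-sorted language: a unary symbol for every `g ∈ G`,
the map `j`, and the field operations. -/
inductive JFun : ℕ → Type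
  | act (g : GQ) : JFun 1
  | jmap : JFun 1
  | add : JFun 2
  | mul : JFun 2
  | zero : JFun 0
  | one : JFun 0

/-- Relation symbols: a unary predicate distinguishing the `H`-sort. -/
inductive JRel : ℕ → Type
  | isH : JRel 1

/-- The (one-sorted encoding of the) two-sorted language
`⟨⟨H ; {g}_{g ∈ G}⟩, ⟨F,+,·,0,1⟩, j : H → F⟩`. -/
def JLang : FirstOrder.Language := ⟨JFun, JRel⟩

/-- A two-sorted structure in the language of the `j`-function: a set `H` with maps
indexed by `G`, a field `F`, and a function `j : H → F`. -/
structure JPreModel : Type 1 where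
  H : Type
  F : Type
  [fieldF : Field F]
  act : GQ → H → H
  j : H → F

attribute [instance] JPreModel.fieldF

/-- The underlying single-sorted carrier `H ⊔ F` of a two-sorted structure. -/
def JPreModel.carrier (M : JPreModel) : Type := M.H ⊕ M.F

instance (M : JPreModel) : JLang.Structure M.carrier where
  funMap {n} f x :=
    match f with
    | .act g => Sum.elim (fun h => (Sum.inl (M.act g h) : M.carrier)) (fun a => Sum.inr a) (x 0)
    | .jmap => Sum.elim (fun h => (Sum.inr (M.j h) : M.carrier)) (fun a => Sum.inr a) (x 0)
    | .add =>
      match x 0, x 1 with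
      | Sum.inr a, Sum.inr b => Sum.inr (a + b)
      | u, _ => u
    | .mul =>
      match x 0, x 1 with
      | Sum.inr a, Sum.inr b => Sum.inr (a * b)
      | u, _ => u
    | .zero => Sum.inr (0 : M.F)
    | .one => Sum.inr (1 : M.F)
  RelMap {n} r x :=
    match r with
    | .isH => (x 0).isLeft

/-- The standard model `ℂ_j = ⟨⟨ℍ; G⟩, ⟨ℂ,+,·,0,1⟩, j : ℍ → ℂ⟩`. -/
def stdModel : JPreModel where
  H := ℍ
  F := ℂ
  act := gqSmul
  j := jFunction

/-- `Th(j)`: the complete first-order theory of the standard model `ℂ_j`. -/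
def ThJ : JLang.Theory := JLang.completeTheory stdModel.carrier

/-- `M` is a model of the complete first-order theory of the standard model. -/
def ModelsThJ (M : JPreModel) : Prop := M.carrier ⊨ ThJ

/-- The `L_{ω₁,ω}` axiom `StandardFibres`: any two points of `H` with the same image
under `j` are related by an element of `SL₂(ℤ)`. -/
def StandardFibres (M : JPreModel) : Prop :=
  ∀ x y : M.H, M.j x = M.j y →
    ∃ γ : Matrix.SpecialLinearGroup (Fin 2) ℤ, M.act (sl2ZtoGQ γ) y = x

/-- The field sort has infinite transcendence degree (over the prime field). -/
def InfiniteTrdeg (M : JPreModel) : Prop :=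
  ∃ v : ℕ → M.F, AlgebraicIndependent ℤ v

/-- A point of the `H`-sort of an abstract model is special if it is fixed by a
nontrivial element of `G`. -/
def JPreModel.IsSpecialPt (M : JPreModel) (τ : M.H) : Prop :=
  ∃ g : GQ, g ≠ 1 ∧ M.act g τ = τ

/-- `ℵ₀`-saturation: every finitely realisable type over finitely many parameters is
realised. -/
def IsOmegaSaturated (M : JPreModel) : Prop :=
  ∀ (n : ℕ) (params : Fin n → M.carrier) (p : Set (JLang.Formula (Fin n ⊕ Unit))),
    (∀ s : Finset (JLang.Formula (Fin n ⊕ Unit)), ↑s ⊆ p →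
      ∃ x : M.carrier, ∀ φ ∈ s, φ.Realize (Sum.elim params (fun _ => x))) →
    ∃ x : M.carrier, ∀ φ ∈ p, φ.Realize (Sum.elim params (fun _ => x))


/-- Inclusion of the `H`-sort into the carrier. -/
def JPreModel.inH (M : JPreModel) (h : M.H) : M.carrier := Sum.inl h

/-- Inclusion of the field sort into the carrier. -/
def JPreModel.inF (M : JPreModel) (f : M.F) : M.carrier := Sum.inr f


/-- A tuple in the `H`-sort of a model is `G`-independent if each entry is non-special
and no two distinct entries lie in the same `G`-orbit. -/
def JPreModel.GIndependent (M : JPreModel) {r : ℕ} (τ : Fin r → M.H) : Prop :=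
  (∀ i, ¬ M.IsSpecialPt (τ i)) ∧
  ∀ i k : Fin r, i ≠ k → ¬ ∃ g : GQ, M.act g (τ i) = τ k

/-- The set of complete types (over `∅`) of tuples `τ̄'`, realisable in models of
`Th(j) + StandardFibres`, whose `j`-images have the same complete (field-sort) type as
the given tuple of complex numbers `z̄`; this is the formal counterpart of counting the
types of tuples `τ̄'` with `j'(τ̄') = j(τ̄)`. -/
def typesAboveFibre {n : ℕ} (z : Fin n → ℂ) :
    Set (Set (FirstOrder.Language.Formula JLang (Fin n))) :=
  {p | ∃ M : JPreModel, ModelsThJ M ∧ StandardFibres M ∧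
    ∃ τ' : Fin n → M.H,
      (∀ φ : FirstOrder.Language.Formula JLang (Fin n),
        φ.Realize (fun i => M.inF (M.j (τ' i))) ↔
          φ.Realize (fun i => stdModel.inF (z i))) ∧
      p = {φ : FirstOrder.Language.Formula JLang (Fin n) |
            φ.Realize (fun i => M.inH (τ' i))}}


end JPaper

namespace JPaper

/-! ### The action of `G` on the upper half plane -/

lemma toGLPosR_apply (a : GL2QPos) (i k : Fin 2) :
    (toGLPosR a : GL (Fin 2) ℝ) i k = (((a : GL (Fin 2) ℚ) i k : ℚ) : ℝ) := rfl

lemma coe_toGLPosR_smul (a : GL2QPos) (z : ℍ) :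
    ((toGLPosR a • z : ℍ) : ℂ) =
      (((a : GL (Fin 2) ℚ) 0 0 : ℚ) * (z : ℂ) + ((a : GL (Fin 2) ℚ) 0 1 : ℚ)) /
        (((a : GL (Fin 2) ℚ) 1 0 : ℚ) * (z : ℂ) + ((a : GL (Fin 2) ℚ) 1 1 : ℚ)) := by
  have h := UpperHalfPlane.coe_smul_of_det_pos (g := (toGLPosR a : GL (Fin 2) ℝ))
    ((Matrix.mem_glpos _).1 (toGLPosR a).2) z
  refine h.trans ?_
  simp [num, denom, toGLPosR_apply]

lemma denom_toGLPosR_ne_zero (a : GL2QPos) (z : ℍ) :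
    (((a : GL (Fin 2) ℚ) 1 0 : ℚ) * (z : ℂ) + ((a : GL (Fin 2) ℚ) 1 1 : ℚ)) ≠ 0 := by
  have := denom_ne_zero (toGLPosR a : GL (Fin 2) ℝ) z
  simpa [denom, toGLPosR_apply] using this

lemma mem_center_GL2QPos {a : GL2QPos} :
    a ∈ Subgroup.center GL2QPos ↔ (a : GL (Fin 2) ℚ) 0 1 = 0 ∧ (a : GL (Fin 2) ℚ) 1 0 = 0 ∧
      (a : GL (Fin 2) ℚ) 0 0 = (a : GL (Fin 2) ℚ) 1 1 := by
  rw [Subgroup.mem_center_iff]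
  constructor
  · intro h
    have comm (γ : SL(2, ℤ)) (i k : Fin 2) :
        (γ i 0 : ℚ) * (a : GL (Fin 2) ℚ) 0 k + (γ i 1 : ℚ) * (a : GL (Fin 2) ℚ) 1 k =
          (a : GL (Fin 2) ℚ) i 0 * (γ 0 k : ℚ) + (a : GL (Fin 2) ℚ) i 1 * (γ 1 k : ℚ) := by
      have e := congrArg (fun m : GL2QPos =>
        ((m : GL (Fin 2) ℚ) : Matrix (Fin 2) (Fin 2) ℚ) i k) (h (sl2ZtoGLQ γ))
      simp only [Subgroup.coe_mul, Units.val_mul, Matrix.mul_apply, Fin.sum_univ_two] at e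
      exact e
    have p := comm ModularGroup.T 0 0
    have q := comm ModularGroup.T 0 1
    have r := comm ModularGroup.S 0 0
    simp [ModularGroup.T, ModularGroup.S] at p q r
    refine ⟨by linarith, p, by linarith⟩
  · rintro ⟨h1, h2, h3⟩ b
    apply Subtype.ext
    apply Units.ext
    ext i j
    fin_cases i <;> fin_cases j <;> simp [Matrix.mul_apply, Fin.sum_univ_two, h1, h2, h3] <;> ring

lemma gqSmul_mk (a : GL2QPos) (z : ℍ) : gqSmul (QuotientGroup.mk a) z = toGLPosR a • z := by
  obtain ⟨c, hc⟩ := QuotientGroup.mk_out_eq_mul (Subgroup.center GL2QPos) a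
  rw [gqSmul, hc, map_mul, mul_smul]
  congr 1
  obtain ⟨h1, h2, h3⟩ := mem_center_GL2QPos.1 c.2
  apply UpperHalfPlane.ext
  have h4 := denom_toGLPosR_ne_zero (c : GL2QPos) z
  rw [coe_toGLPosR_smul]
  rw [h2] at h4 ⊢
  rw [h1, h3]
  simp only [Rat.cast_zero, zero_mul, zero_add, add_zero] at h4 ⊢
  field_simp

instance gqMulAction : MulAction GQ ℍ where
  smul := gqSmul
  one_smul z := by
    change gqSmul (QuotientGroup.mk 1) z = z
    rw [gqSmul_mk, map_one, one_smul]
  mul_smul g h z := by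
    induction g using QuotientGroup.induction_on with | H a =>
    induction h using QuotientGroup.induction_on with | H b =>
    change gqSmul (QuotientGroup.mk (a * b)) z = gqSmul _ (gqSmul _ z)
    rw [gqSmul_mk, gqSmul_mk, gqSmul_mk, map_mul, mul_smul]

lemma gq_mk_smul (a : GL2QPos) (z : ℍ) : (QuotientGroup.mk a : GQ) • z = toGLPosR a • z :=
  gqSmul_mk a z

/-- A nontrivial element of `G` fixes at most one point of `ℍ`. -/
lemma eq_of_gq_fixed {g : GQ} (hg : g ≠ 1) {x y : ℍ} (hx : g • x = x) (hy : g • y = y) :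
    x = y := by
  induction g using QuotientGroup.induction_on with | H a =>
  rw [gq_mk_smul] at hx hy
  have hx' := congrArg (fun w : ℍ => (w : ℂ)) hx
  have hy' := congrArg (fun w : ℍ => (w : ℂ)) hy
  simp only [coe_toGLPosR_smul] at hx' hy'
  rw [div_eq_iff (denom_toGLPosR_ne_zero a x)] at hx'
  rw [div_eq_iff (denom_toGLPosR_ne_zero a y)] at hy'
  by_contra hne
  apply hg
  rw [QuotientGroup.eq_one_iff, mem_center_GL2QPos]
  set A := (a : GL (Fin 2) ℚ) 0 0
  set B := (a : GL (Fin 2) ℚ) 0 1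
  set C := (a : GL (Fin 2) ℚ) 1 0
  set D := (a : GL (Fin 2) ℚ) 1 1
  have hxy : (x : ℂ) - y ≠ 0 := fun h => hne (UpperHalfPlane.ext (sub_eq_zero.1 h))
  have h1 : (C : ℂ) * ((x : ℂ) + y) + (D - A) = 0 := by
    apply mul_left_cancel₀ hxy
    linear_combination hy' - hx'
  have h2 : (C : ℝ) * (x.im + y.im) = 0 := by
    have := congrArg Complex.im h1
    simpa using this
  have hC : C = 0 := by
    have : x.im + y.im ≠ 0 := (add_pos x.im_pos y.im_pos).ne'
    exact_mod_cast (mul_eq_zero.1 h2).resolve_right this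
  have hAD : A = D := by
    rw [hC] at h1
    simp only [Rat.cast_zero, zero_mul, zero_add] at h1
    exact_mod_cast (sub_eq_zero.1 h1).symm
  refine ⟨?_, hC, hAD⟩
  rw [hC, hAD] at hx'
  simp only [Rat.cast_zero, zero_mul, zero_add] at hx'
  have : (B : ℂ) = 0 := by linear_combination hx'
  exact_mod_cast this

lemma sl2ZtoGLQ_mul (γ δ : SL(2, ℤ)) : sl2ZtoGLQ (γ * δ) = sl2ZtoGLQ γ * sl2ZtoGLQ δ := by
  apply Subtype.ext
  simp [sl2ZtoGLQ]

/-- The homomorphism `SL₂(ℤ) →* G`. -/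
def sl2ZHom : SL(2, ℤ) →* GQ :=
  MonoidHom.mk' sl2ZtoGQ fun γ δ => by simp [sl2ZtoGQ, sl2ZtoGLQ_mul]

lemma sl2ZHom_smul (γ : SL(2, ℤ)) (z : ℍ) : sl2ZHom γ • z = γ • z := by
  change (QuotientGroup.mk (sl2ZtoGLQ γ) : GQ) • z = _
  rw [gq_mk_smul]
  apply UpperHalfPlane.ext
  rw [coe_toGLPosR_smul, coe_specialLinearGroup_apply]
  simp [sl2ZtoGLQ]

/-- Deep congruence subgroups are conjugated into `SL₂(ℤ)` by a given element of `G`. -/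
lemma exists_Gamma_conj (g : GQ) :
    ∃ N : ℕ, N ≠ 0 ∧ ∀ γ ∈ CongruenceSubgroup.Gamma N, ∃ δ : SL(2, ℤ),
      g * sl2ZHom γ = sl2ZHom δ * g := by
  induction g using QuotientGroup.induction_on with | H a =>
  obtain ⟨N, hN, h⟩ := CongruenceSubgroup.exists_Gamma_le_conj (a : GL (Fin 2) ℚ) 1
  refine ⟨N, hN, fun γ hγ => ?_⟩
  obtain ⟨δ, -, hδ⟩ := h γ hγ
  refine ⟨δ, ?_⟩
  change (QuotientGroup.mk (a * sl2ZtoGLQ γ) : GQ) = QuotientGroup.mk (sl2ZtoGLQ δ * a)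
  congr 1
  apply Subtype.ext
  have e : ∀ ε : SL(2, ℤ), ((sl2ZtoGLQ ε : GL2QPos) : GL (Fin 2) ℚ) =
      Matrix.SpecialLinearGroup.mapGL ℚ ε := fun ε => rfl
  rw [Subgroup.coe_mul, Subgroup.coe_mul, e, e, hδ]
  group

/-! ### The `j`-function in terms of Eisenstein series -/

/-- The lattice sum `∑' (m τ + n)⁻ᵏ` over nonzero pairs of integers. -/
def latticeSum (k : ℕ) (τ : ℍ) : ℂ :=
  ∑' p : ℤ × ℤ, (((p.1 : ℂ) * (τ : ℂ) + (p.2 : ℂ)) ^ k)⁻¹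

lemma latticeSum_eq_E {k : ℕ} (hk : 3 ≤ k) (τ : ℍ) :
    latticeSum k τ = 2 * riemannZeta k * ModularForm.E hk τ := by
  have h := tsum_eisSummand_eq_riemannZeta_mul_eisensteinSeries hk τ
  have hE : ModularForm.E hk τ = (1 / 2 : ℂ) * eisensteinSeries (N := 1) 0 k τ :=
    rfl
  rw [hE, latticeSum]
  rw [← (finTwoArrowEquiv ℤ).tsum_eq]
  have : ∀ v : Fin 2 → ℤ, EisensteinSeries.eisSummand k v τ =
      ((((finTwoArrowEquiv ℤ v).1 : ℂ) * (τ : ℂ) + ((finTwoArrowEquiv ℤ v).2 : ℂ)) ^ k)⁻¹ := by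
    intro v
    simp [EisensteinSeries.eisSummand]
  rw [← tsum_congr this, h]
  ring

lemma riemannZeta_six : riemannZeta 6 = (Real.pi : ℂ) ^ 6 / 945 := by
  have h := riemannZeta_two_mul_nat (k := 3) (by norm_num)
  have hb : bernoulli 6 = 1 / 42 := by
    rw [bernoulli_eq_bernoulli'_of_ne_one (by norm_num), bernoulli'_def]
    have h5 : bernoulli' 5 = 0 := bernoulli'_eq_zero_of_odd (by decide) (by norm_num)
    norm_num [Finset.sum_range_succ, h5, Nat.choose]
  norm_num [hb, Nat.factorial] at h
  rw [h]
  ring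

lemma jFunction_eq_latticeSum (τ : ℍ) :
    jFunction τ = 1728 * (60 * latticeSum 4 τ) ^ 3 /
      ((60 * latticeSum 4 τ) ^ 3 - 27 * (140 * latticeSum 6 τ) ^ 2) := by
  have h (k : ℕ) (hk : k ≠ 0) : (∑' p : ℤ × ℤ,
      if p = 0 then 0 else (((p.1 : ℂ) * (τ : ℂ) + (p.2 : ℂ)) ^ k)⁻¹) = latticeSum k τ := by
    refine tsum_congr fun p => ?_
    split_ifs with hp
    · simp [hp, hk]
    · rfl
  rw [jFunction, h 4 (by norm_num), h 6 (by norm_num)]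

lemma latticeSum_four (τ : ℍ) : latticeSum 4 τ = (Real.pi : ℂ) ^ 4 / 45 * ModularForm.E₄ τ := by
  have := riemannZeta_four
  rw [latticeSum_eq_E (by norm_num)]
  push_cast
  rw [this]
  ring

lemma latticeSum_six (τ : ℍ) :
    latticeSum 6 τ = 2 * (Real.pi : ℂ) ^ 6 / 945 * ModularForm.E₆ τ := by
  rw [latticeSum_eq_E (by norm_num)]
  push_cast
  rw [riemannZeta_six]
  ring

lemma latticeSum_discriminant (τ : ℍ) :
    (60 * latticeSum 4 τ) ^ 3 - 27 * (140 * latticeSum 6 τ) ^ 2 =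
      4096 * (Real.pi : ℂ) ^ 12 * ModularForm.discriminant τ := by
  rw [ModularForm.discriminant_eq_E₄_cube_sub_E₆_sq, latticeSum_four, latticeSum_six]
  ring

lemma latticeSum_discriminant_ne_zero (τ : ℍ) :
    (60 * latticeSum 4 τ) ^ 3 - 27 * (140 * latticeSum 6 τ) ^ 2 ≠ 0 := by
  rw [latticeSum_discriminant]
  have hpi : (Real.pi : ℂ) ≠ 0 := by exact_mod_cast Real.pi_ne_zero
  exact mul_ne_zero (mul_ne_zero (by norm_num) (pow_ne_zero _ hpi))
    (ModularForm.discriminant_ne_zero τ)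

lemma latticeSum_smul {k : ℕ} (hk : 3 ≤ k) (γ : SL(2, ℤ)) (τ : ℍ) :
    latticeSum k (γ • τ) = denom γ τ ^ k * latticeSum k τ := by
  have h := SlashInvariantForm.slash_action_eqn'' (Γ := 𝒮ℒ) (ModularForm.E hk)
    (γ := Matrix.SpecialLinearGroup.mapGL ℝ γ) ⟨γ, rfl⟩ τ
  rw [latticeSum_eq_E hk, latticeSum_eq_E hk]
  have h' : ModularForm.E hk (γ • τ) = denom γ τ ^ k * ModularForm.E hk τ := by
    rw [← zpow_natCast]
    exact h
  rw [h']
  ring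

/-- The `j`-function is invariant under `SL₂(ℤ)`. -/
lemma jFunction_smul (γ : SL(2, ℤ)) (τ : ℍ) : jFunction (γ • τ) = jFunction τ := by
  have hd : denom γ τ ≠ 0 := denom_ne_zero γ τ
  have hD := latticeSum_discriminant_ne_zero τ
  rw [jFunction_eq_latticeSum, jFunction_eq_latticeSum, latticeSum_smul (by norm_num),
    latticeSum_smul (by norm_num)]
  set A := latticeSum 4 τ
  set B := latticeSum 6 τ
  set d := denom γ τ
  have : (60 * (d ^ 4 * A)) ^ 3 - 27 * (140 * (d ^ 6 * B)) ^ 2 =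
      d ^ 12 * ((60 * A) ^ 3 - 27 * (140 * B) ^ 2) := by ring
  rw [this, show 1728 * (60 * (d ^ 4 * A)) ^ 3 = d ^ 12 * (1728 * (60 * A) ^ 3) by ring,
    mul_div_mul_left _ _ (pow_ne_zero _ hd)]

/-! ### The invariants `g₂, g₃` determine the lattice -/

open Filter Topology in
/-- Uniqueness of the regular part at the origin of a solution of
`y'² = 4 y³ - g₂ y - g₃` with polar part `z⁻²`. -/
lemma eventuallyEq_of_weierstrass_equation {p q : ℂ → ℂ} {a b : ℂ}
    (hp : AnalyticAt ℂ p 0) (hq : AnalyticAt ℂ q 0)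
    (hp' : ∀ᶠ z in 𝓝[≠] (0 : ℂ), (z ^ 3 * deriv p z - 2) ^ 2 =
      4 * (z ^ 2 * p z + 1) ^ 3 - a * z ^ 4 * (z ^ 2 * p z + 1) - b * z ^ 6)
    (hq' : ∀ᶠ z in 𝓝[≠] (0 : ℂ), (z ^ 3 * deriv q z - 2) ^ 2 =
      4 * (z ^ 2 * q z + 1) ^ 3 - a * z ^ 4 * (z ^ 2 * q z + 1) - b * z ^ 6) :
    p =ᶠ[𝓝 0] q := by
  by_contra hne
  have hD : AnalyticAt ℂ (fun z => p z - q z) 0 := hp.sub hq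
  have hD0 : ¬ ∀ᶠ z in 𝓝 (0 : ℂ), p z - q z = 0 := fun h =>
    hne (h.mono fun z hz => sub_eq_zero.1 hz)
  obtain ⟨m, u, hu, hu0, hDu⟩ := hD.exists_eventuallyEq_pow_smul_nonzero_iff.2 hD0
  simp only [sub_zero, smul_eq_mul] at hDu
  have hder : ∀ᶠ z in 𝓝 (0 : ℂ),
      z * (deriv p z - deriv q z) = z ^ m * (m * u z + z * deriv u z) := by
    filter_upwards [hDu.eventually_nhds, hp.eventually_analyticAt, hq.eventually_analyticAt,
      hu.eventually_analyticAt] with z hz hpz hqz huz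
    have h1 : deriv (fun z => p z - q z) z = deriv (fun z => z ^ m * u z) z :=
      Filter.EventuallyEq.deriv_eq hz
    rw [deriv_fun_sub hpz.differentiableAt hqz.differentiableAt,
      deriv_fun_mul (differentiableAt_pow m) huz.differentiableAt, deriv_pow_field] at h1
    rw [h1]
    rcases m with _ | m
    · simp
    · simp
      ring
  have key : ∀ᶠ z in 𝓝[≠] (0 : ℂ),
      (m * u z + z * deriv u z) * (z ^ 3 * (deriv p z + deriv q z) - 4) =
        u z * (4 * ((z ^ 2 * p z + 1) ^ 2 + (z ^ 2 * p z + 1) * (z ^ 2 * q z + 1) +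
          (z ^ 2 * q z + 1) ^ 2) - a * z ^ 4) := by
    filter_upwards [hp', hq', hder.filter_mono nhdsWithin_le_nhds,
      hDu.filter_mono nhdsWithin_le_nhds, self_mem_nhdsWithin] with z h1 h2 h3 h4 hz
    have hz : z ≠ 0 := hz
    apply mul_left_cancel₀ (pow_ne_zero (m + 2) hz)
    linear_combination (norm := skip) h1 - h2 -
      z ^ 2 * (z ^ 3 * (deriv p z + deriv q z) - 4) * h3 +
      z ^ 2 * (4 * ((z ^ 2 * p z + 1) ^ 2 + (z ^ 2 * p z + 1) * (z ^ 2 * q z + 1) +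
          (z ^ 2 * q z + 1) ^ 2) - a * z ^ 4) * h4
    ring
  have hpc := hp.continuousAt
  have hqc := hq.continuousAt
  have huc := hu.continuousAt
  have hpd := hp.deriv.continuousAt
  have hqd := hq.deriv.continuousAt
  have hud := hu.deriv.continuousAt
  have c1 : ContinuousAt (fun z : ℂ =>
      (m * u z + z * deriv u z) * (z ^ 3 * (deriv p z + deriv q z) - 4)) 0 := by fun_prop
  have c2 : ContinuousAt (fun z : ℂ =>
      u z * (4 * ((z ^ 2 * p z + 1) ^ 2 + (z ^ 2 * p z + 1) * (z ^ 2 * q z + 1) +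
          (z ^ 2 * q z + 1) ^ 2) - a * z ^ 4)) 0 := by fun_prop
  have lim := tendsto_nhds_unique_of_eventuallyEq
    (c1.tendsto.mono_left (nhdsWithin_le_nhds (s := {0}ᶜ)))
    (c2.tendsto.mono_left nhdsWithin_le_nhds) key
  have h0 : (4 * (m + 3) : ℂ) * u 0 = 0 := by
    simp only [ne_eq, OfNat.ofNat_ne_zero, not_false_eq_true, zero_pow, zero_mul, mul_zero,
      add_zero, zero_add, zero_sub, sub_zero, one_pow] at lim
    linear_combination -lim
  have : (4 * (m + 3) : ℂ) ≠ 0 := by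
    have : ((4 * (m + 3) : ℕ) : ℂ) ≠ 0 := Nat.cast_ne_zero.2 (by omega)
    exact_mod_cast this
  exact (mul_ne_zero this hu0) h0

open Filter Topology PeriodPair in
lemma weierstrassPExcept_equation (L : PeriodPair) :
    ∀ᶠ z in 𝓝[≠] (0 : ℂ), (z ^ 3 * deriv (L.weierstrassPExcept 0) z - 2) ^ 2 =
      4 * (z ^ 2 * L.weierstrassPExcept 0 z + 1) ^ 3 -
        L.g₂ * z ^ 4 * (z ^ 2 * L.weierstrassPExcept 0 z + 1) - L.g₃ * z ^ 6 := by
  filter_upwards [(L.compl_lattice_sdiff_singleton_mem_nhds 0 |>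
    mem_nhdsWithin_of_mem_nhds), self_mem_nhdsWithin] with z hz hz0
  have hz0 : z ≠ 0 := hz0
  have hzL : z ∉ L.lattice := fun h => hz ⟨h, hz0⟩
  rw [L.eqOn_deriv_weierstrassPExcept_derivWeierstrassPExcept 0 hz]
  have e1 := L.weierstrassPExcept_def 0 z
  have e2 := L.derivWeierstrassPExcept_def 0 z
  have e3 := L.derivWeierstrassP_sq z hzL
  simp only [ZeroMemClass.coe_zero, sub_zero] at e1 e2
  norm_num at e1
  have e1' : z ^ 2 * L.weierstrassPExcept 0 z + 1 = z ^ 2 * L.weierstrassP z := by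
    rw [e1]; field_simp; ring
  have e2' : z ^ 3 * L.derivWeierstrassPExcept 0 z - 2 = z ^ 3 * L.derivWeierstrassP z := by
    rw [e2]; field_simp; ring
  rw [e1', e2']
  linear_combination z ^ 6 * e3

lemma countable_lattice (L : PeriodPair) : (L.lattice : Set ℂ).Countable :=
  Set.countable_coe_iff.1 (L.latticeEquivProd.toEquiv.injective.countable)

open Filter Topology PeriodPair in
lemma lattice_compl_mem_nhdsNE (L : PeriodPair) (x : ℂ) : (L.lattice : Set ℂ)ᶜ ∈ 𝓝[≠] x := by
  filter_upwards [(L.compl_lattice_sdiff_singleton_mem_nhds x |>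
    mem_nhdsWithin_of_mem_nhds), self_mem_nhdsWithin] with z hz hz0 h
  exact hz ⟨h, hz0⟩

open Filter Topology PeriodPair in
lemma weierstrassP_eqOn {L M : PeriodPair} (h2 : L.g₂ = M.g₂) (h3 : L.g₃ = M.g₃) :
    Set.EqOn L.weierstrassP M.weierstrassP ((L.lattice : Set ℂ) ∪ M.lattice)ᶜ := by
  have hloc : L.weierstrassPExcept 0 =ᶠ[𝓝 0] M.weierstrassPExcept 0 :=
    eventuallyEq_of_weierstrass_equation (L.analyticAt_weierstrassPExcept 0)
      (M.analyticAt_weierstrassPExcept 0) (weierstrassPExcept_equation L)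
      (by rw [h2, h3]; exact weierstrassPExcept_equation M)
  have hfr : ∀ᶠ z in 𝓝[≠] (0 : ℂ), L.weierstrassP =ᶠ[𝓝 z] M.weierstrassP ∧
      z ∈ ((L.lattice : Set ℂ) ∪ M.lattice)ᶜ := by
    filter_upwards [hloc.eventually_nhds.filter_mono nhdsWithin_le_nhds,
      lattice_compl_mem_nhdsNE L 0, lattice_compl_mem_nhdsNE M 0] with z hz hL hM
    refine ⟨hz.mono fun w hw => ?_, by simpa using ⟨hL, hM⟩⟩
    have e1 := L.weierstrassPExcept_def 0 w
    have e2 := M.weierstrassPExcept_def 0 w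
    simp only [ZeroMemClass.coe_zero] at e1 e2
    have hw' : L.weierstrassPExcept 0 w = M.weierstrassPExcept 0 w := hw
    linear_combination hw' - e1 + e2
  obtain ⟨z, hz, hzU⟩ := hfr.exists
  have hconn := ((countable_lattice L).union (countable_lattice M)).isPathConnected_compl_of_one_lt_rank
    (by rw [Complex.rank_real_complex]; norm_num)
  exact (L.analyticOnNhd_weierstrassP.mono (by simp)).eqOn_of_preconnected_of_eventuallyEq
    (M.analyticOnNhd_weierstrassP.mono (by simp)) hconn.isConnected.isPreconnected hzU hz

open Filter Topology PeriodPair in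
lemma lattice_le_of_invariants {L M : PeriodPair} (h2 : L.g₂ = M.g₂) (h3 : L.g₃ = M.g₃) :
    L.lattice ≤ M.lattice := by
  intro l hl
  by_contra hlM
  have e : L.weierstrassP =ᶠ[𝓝[≠] l] M.weierstrassP := by
    filter_upwards [lattice_compl_mem_nhdsNE L l, lattice_compl_mem_nhdsNE M l] with z hL hM
    exact weierstrassP_eqOn h2 h3 (by simpa using ⟨hL, hM⟩)
  have h := meromorphicOrderAt_congr e
  rw [L.order_weierstrassP l hl] at h
  have h' := (M.analyticOnNhd_weierstrassP l hlM).meromorphicOrderAt_nonneg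
  rw [← h] at h'
  exact absurd h' (by decide)

lemma lattice_eq_of_invariants {L M : PeriodPair} (h2 : L.g₂ = M.g₂) (h3 : L.g₃ = M.g₃) :
    L.lattice = M.lattice :=
  le_antisymm (lattice_le_of_invariants h2 h3) (lattice_le_of_invariants h2.symm h3.symm)

/-! ### Fibres of the `j`-function -/

/-- The period pair `(c τ, c)`. -/
def scaledPair (c : ℂ) (hc : c ≠ 0) (τ : ℍ) : PeriodPair where
  ω₁ := c * τ
  ω₂ := c
  indep := by
    rw [LinearIndependent.pair_iff]
    intro s t h
    have h1 : (s : ℂ) * τ + t = 0 := by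
      apply mul_left_cancel₀ hc
      simp only [Complex.real_smul] at h
      linear_combination h
    have h2 := congrArg Complex.im h1
    simp only [Complex.add_im, Complex.im_ofReal_mul, Complex.ofReal_im,
      add_zero, Complex.zero_im, mul_eq_zero, coe_im, τ.im_ne_zero, or_false] at h2
    refine ⟨h2, ?_⟩
    rw [h2] at h1
    simpa using h1

lemma scaledPair_G (c : ℂ) (hc : c ≠ 0) (τ : ℍ) (k : ℕ) :
    c ^ k * (scaledPair c hc τ).G k = latticeSum k τ := by
  rw [PeriodPair.G, latticeSum,
    ← (scaledPair c hc τ).latticeEquivProd.symm.toEquiv.tsum_eq, ← tsum_mul_left]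
  refine tsum_congr fun p => ?_
  have h := (scaledPair c hc τ).latticeEquiv_symm_apply p
  change c ^ k * (((scaledPair c hc τ).latticeEquivProd.symm p).1 ^ k)⁻¹ = _
  rw [h]
  change c ^ k * ((p.1 * (c * τ) + p.2 * c) ^ k)⁻¹ = _
  rw [show (p.1 * (c * τ) + p.2 * c : ℂ) = c * (p.1 * τ + p.2) by ring, mul_pow, mul_inv,
    mul_inv_cancel_left₀ (pow_ne_zero _ hc)]

lemma exists_scaling {a b a' b' : ℂ} (hD : a ^ 3 - 27 * b ^ 2 ≠ 0) (hD' : a' ^ 3 - 27 * b' ^ 2 ≠ 0)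
    (h : a ^ 3 / (a ^ 3 - 27 * b ^ 2) = a' ^ 3 / (a' ^ 3 - 27 * b' ^ 2)) :
    ∃ c : ℂ, c ≠ 0 ∧ a = c ^ 4 * a' ∧ b = c ^ 6 * b' := by
  rw [div_eq_div_iff hD hD'] at h
  have h1 : a ^ 3 * b' ^ 2 = a' ^ 3 * b ^ 2 := by linear_combination -h / 27
  have ha : a = 0 ↔ a' = 0 := by
    constructor <;> rintro rfl <;> simp_all
  have hb : b = 0 ↔ b' = 0 := by
    constructor <;> rintro rfl <;> simp_all
  by_cases ha0 : a' = 0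
  · have hb0 : b' ≠ 0 := by rintro rfl; simp [ha0] at hD'
    obtain ⟨c, hc⟩ := IsAlgClosed.exists_pow_nat_eq (b / b') (n := 6) (by norm_num)
    refine ⟨c, ?_, by rw [ha.2 ha0, ha0, mul_zero], by rw [hc, div_mul_cancel₀ _ hb0]⟩
    rintro rfl
    have : b / b' ≠ 0 := div_ne_zero (fun h => hb0 (hb.1 h)) hb0
    simp [← hc] at this
  by_cases hb0 : b' = 0
  · obtain ⟨c, hc⟩ := IsAlgClosed.exists_pow_nat_eq (a / a') (n := 4) (by norm_num)
    refine ⟨c, ?_, by rw [hc, div_mul_cancel₀ _ ha0], by rw [hb.2 hb0, hb0, mul_zero]⟩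
    rintro rfl
    have : a / a' ≠ 0 := div_ne_zero (fun h => ha0 (ha.1 h)) ha0
    simp [← hc] at this
  have ha1 : a ≠ 0 := fun h => ha0 (ha.1 h)
  have hb1 : b ≠ 0 := fun h => hb0 (hb.1 h)
  obtain ⟨c, hc⟩ := IsAlgClosed.exists_pow_nat_eq ((b * a') / (b' * a)) (n := 2) (by norm_num)
  have h4 : c ^ 4 = a / a' := by
    rw [show c ^ 4 = (c ^ 2) ^ 2 by ring, hc]
    field_simp
    linear_combination -h1
  refine ⟨c, ?_, by rw [h4, div_mul_cancel₀ _ ha0], ?_⟩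
  · rintro rfl
    have : a / a' ≠ 0 := div_ne_zero ha1 ha0
    simp [← h4] at this
  · rw [show c ^ 6 = c ^ 4 * c ^ 2 by ring, h4, hc]
    field_simp

lemma int_pair_eq (y : ℍ) {m n m' n' : ℤ} (h : (m * y + n : ℂ) = m' * y + n') :
    m = m' ∧ n = n' := by
  have h2 := congrArg Complex.im h
  simp [y.im_ne_zero] at h2
  refine ⟨h2, ?_⟩
  rw [h2] at h
  exact_mod_cast add_left_cancel h

lemma exists_smul_of_scaled_lattice_eq {c : ℂ} (hc : c ≠ 0) {x y : ℍ}
    (h : (scaledPair c hc x).lattice = (scaledPair 1 one_ne_zero y).lattice) :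
    ∃ γ : SL(2, ℤ), γ • y = x := by
  have h1 : (scaledPair c hc x).ω₁ ∈ (scaledPair 1 one_ne_zero y).lattice :=
    h ▸ (scaledPair c hc x).ω₁_mem_lattice
  have h2 : (scaledPair c hc x).ω₂ ∈ (scaledPair 1 one_ne_zero y).lattice :=
    h ▸ (scaledPair c hc x).ω₂_mem_lattice
  have h3 : (scaledPair 1 one_ne_zero y).ω₁ ∈ (scaledPair c hc x).lattice :=
    h ▸ (scaledPair 1 one_ne_zero y).ω₁_mem_lattice
  have h4 : (scaledPair 1 one_ne_zero y).ω₂ ∈ (scaledPair c hc x).lattice :=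
    h ▸ (scaledPair 1 one_ne_zero y).ω₂_mem_lattice
  rw [PeriodPair.mem_lattice] at h1 h2 h3 h4
  simp only [scaledPair, one_mul, mul_one] at h1 h2 h3 h4
  obtain ⟨p, q, e1⟩ := h1
  obtain ⟨r, s, e2⟩ := h2
  obtain ⟨p', q', e3⟩ := h3
  obtain ⟨r', s', e4⟩ := h4
  obtain ⟨i1, i2⟩ := int_pair_eq y (m := p' * p + q' * r) (n := p' * q + q' * s) (m' := 1) (n' := 0)
    (by push_cast; linear_combination e3 + p' * e1 + q' * e2)
  obtain ⟨i3, i4⟩ := int_pair_eq y (m := r' * p + s' * r) (n := r' * q + s' * s) (m' := 0) (n' := 1)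
    (by push_cast; linear_combination e4 + r' * e1 + s' * e2)
  have hdet : (p' * s' - q' * r') * (p * s - q * r) = 1 := by
    have e : (p' * s' - q' * r') * (p * s - q * r) =
        (p' * p + q' * r) * (r' * q + s' * s) - (p' * q + q' * s) * (r' * p + s' * r) := by ring
    rw [e, i1, i2, i3, i4]
    norm_num
  have him : (x.im : ℝ) * Complex.normSq c = (p * s - q * r : ℤ) * y.im := by
    have e : (c * x) * (starRingEnd ℂ) c = (p * y + q) * (starRingEnd ℂ) (r * y + s) := by
      rw [← e1, ← e2]
    have e' : (x : ℂ) * (Complex.normSq c : ℂ) = (p * y + q) * (starRingEnd ℂ) (r * y + s) := by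
      rw [← e, Complex.normSq_eq_conj_mul_self]
      ring
    have e'' := congrArg Complex.im e'
    simp at e''
    push_cast
    linear_combination e''
  have hpos : 0 < p * s - q * r := by
    have h5 : (0 : ℝ) < (p * s - q * r : ℤ) * y.im := by
      rw [← him]
      exact mul_pos x.im_pos (Complex.normSq_pos.2 hc)
    exact_mod_cast (pos_iff_pos_of_mul_pos h5).2 y.im_pos
  have hone : p * s - q * r = 1 := by
    rcases Int.isUnit_iff.1 (IsUnit.of_mul_eq_one_right _ hdet) with h | h
    · exact h
    · omega
  let γ : SL(2, ℤ) := ⟨!![p, q; r, s], by rw [Matrix.det_fin_two_of]; exact hone⟩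
  refine ⟨γ, UpperHalfPlane.ext ?_⟩
  have e : ((γ • y : ℍ) : ℂ) = (p * y + q) / (r * y + s) := by
    rw [coe_specialLinearGroup_apply]
    simp [γ]
  rw [e, e1, e2]
  field_simp

/-- Points with the same `j`-invariant are `SL₂(ℤ)`-equivalent. -/
lemma exists_smul_of_jFunction_eq {x y : ℍ} (h : jFunction x = jFunction y) :
    ∃ γ : SL(2, ℤ), γ • y = x := by
  rw [jFunction_eq_latticeSum, jFunction_eq_latticeSum, mul_div_assoc, mul_div_assoc] at h
  obtain ⟨c, hc, h4, h6⟩ := exists_scaling (latticeSum_discriminant_ne_zero x)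
    (latticeSum_discriminant_ne_zero y) (mul_left_cancel₀ (by norm_num) h)
  apply exists_smul_of_scaled_lattice_eq hc
  have e4 := scaledPair_G c hc x 4
  have e6 := scaledPair_G c hc x 6
  have f4 := scaledPair_G 1 one_ne_zero y 4
  have f6 := scaledPair_G 1 one_ne_zero y 6
  apply lattice_eq_of_invariants
  · rw [PeriodPair.g₂, PeriodPair.g₂]
    apply mul_left_cancel₀ (pow_ne_zero 4 hc)
    linear_combination 60 * e4 + h4 - c ^ 4 * 60 * f4
  · rw [PeriodPair.g₃, PeriodPair.g₃]
    apply mul_left_cancel₀ (pow_ne_zero 6 hc)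
    linear_combination 140 * e6 + h6 - c ^ 6 * 140 * f6

lemma jFunction_eq_iff {x y : ℍ} :
    jFunction x = jFunction y ↔ ∃ γ : SL(2, ℤ), sl2ZHom γ • y = x := by
  simp only [sl2ZHom_smul]
  refine ⟨exists_smul_of_jFunction_eq, ?_⟩
  rintro ⟨γ, rfl⟩
  exact jFunction_smul γ y

/-! ### Back-and-forth between structures with the same `H`-sort -/

open FirstOrder FirstOrder.Language Pointwise

/-- The structure obtained from the standard model by replacing the map `j`. -/
def twist (f : ℍ → ℂ) : JPreModel where
  H := ℍ
  F := ℂ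
  act := gqSmul
  j := f

/-- The action of `G` on the disjoint union of the two sorts, trivial on the field sort. -/
def carAct (g : GQ) : ℍ ⊕ ℂ → ℍ ⊕ ℂ := Sum.elim (fun x => Sum.inl (g • x)) Sum.inr

/-- The interpretation of the symbol `j` on the disjoint union of the two sorts. -/
def carJ (f : ℍ → ℂ) : ℍ ⊕ ℂ → ℂ := Sum.elim f id

@[simp] lemma carAct_inl (g : GQ) (x : ℍ) : carAct g (Sum.inl x) = Sum.inl (g • x) := rfl

@[simp] lemma carAct_inr (g : GQ) (c : ℂ) : carAct g (Sum.inr c) = Sum.inr c := rfl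

@[simp] lemma carJ_inl (f : ℍ → ℂ) (x : ℍ) : carJ f (Sum.inl x) = f x := rfl

@[simp] lemma carJ_inr (f : ℍ → ℂ) (c : ℂ) : carJ f (Sum.inr c) = c := rfl

lemma carAct_mul (g h : GQ) (u : ℍ ⊕ ℂ) : carAct (g * h) u = carAct g (carAct h u) := by
  cases u <;> simp [mul_smul]

@[simp] lemma carAct_one (u : ℍ ⊕ ℂ) : carAct 1 u = u := by
  cases u <;> simp

lemma carAct_eq_iff {g : GQ} {u v : ℍ ⊕ ℂ} : carAct g u = v ↔ u = carAct g⁻¹ v := by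
  constructor
  · rintro rfl
    rw [← carAct_mul, inv_mul_cancel, carAct_one]
  · rintro rfl
    rw [← carAct_mul, mul_inv_cancel, carAct_one]

@[simp] lemma isLeft_carAct (g : GQ) (u : ℍ ⊕ ℂ) : (carAct g u).isLeft = u.isLeft := by
  cases u <;> rfl

/-- Two tuples are similar with respect to a finite set `B` of elements of `G` if they have the
same sorts, the same `j`-images of `B`-translates, and satisfy the same relations given by
elements of `B`. -/
structure Similar {ι : Type*} (B : Finset GQ) (f f' : ℍ → ℂ) (v v' : ι → ℍ ⊕ ℂ) : Prop where
  side : ∀ i, (v i).isLeft = (v' i).isLeft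
  val : ∀ i, ∀ h ∈ B, carJ f (carAct h (v i)) = carJ f' (carAct h (v' i))
  rel : ∀ i k, ∀ h ∈ B, carAct h (v i) = v k ↔ carAct h (v' i) = v' k

section Similar

variable {ι κ : Type*} {B C : Finset GQ} {f f' : ℍ → ℂ} {v v' : ι → ℍ ⊕ ℂ}

lemma Similar.mono (h : Similar C f f' v v') (hBC : B ⊆ C) : Similar B f f' v v' :=
  ⟨h.side, fun i g hg => h.val i g (hBC hg), fun i k g hg => h.rel i k g (hBC hg)⟩

lemma Similar.symm (h : Similar B f f' v v') : Similar B f' f v' v :=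
  ⟨fun i => (h.side i).symm, fun i g hg => (h.val i g hg).symm,
    fun i k g hg => (h.rel i k g hg).symm⟩

lemma Similar.comp (h : Similar B f f' v v') (e : κ → ι) : Similar B f f' (v ∘ e) (v' ∘ e) :=
  ⟨fun i => h.side (e i), fun i => h.val (e i), fun i k => h.rel (e i) (e k)⟩

lemma Similar.eq_inr_iff (h : Similar B f f' v v') (h1 : 1 ∈ B) (i : ι) (c : ℂ) :
    v i = Sum.inr c ↔ v' i = Sum.inr c := by
  have hs := h.side i
  have hv := h.val i 1 h1
  rcases hi : v i with x | a <;> rcases hi' : v' i with x' | a' <;> simp_all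

end Similar

/-- The extension to both sorts of a binary operation on the field sort. -/
def carBin (op : ℂ → ℂ → ℂ) (u w : ℍ ⊕ ℂ) : ℍ ⊕ ℂ :=
  match u, w with
  | Sum.inr a, Sum.inr b => Sum.inr (op a b)
  | u, _ => u

/-- Two elements correspond with respect to a pair of tuples if they are equal elements of the
field sort or are obtained by the same element of `B` from entries with the same index. -/
def Corresponds {ι : Type*} (B : Finset GQ) (v v' : ι → ℍ ⊕ ℂ) (u u' : ℍ ⊕ ℂ) : Prop :=
  (∃ c : ℂ, u = Sum.inr c ∧ u' = Sum.inr c) ∨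
    ∃ i, ∃ g ∈ B, (v i).isLeft ∧ u = carAct g (v i) ∧ u' = carAct g (v' i)

lemma Corresponds.mono {ι : Type*} {B C : Finset GQ} {v v' : ι → ℍ ⊕ ℂ} {u u' : ℍ ⊕ ℂ}
    (h : Corresponds B v v' u u') (hBC : B ⊆ C) : Corresponds C v v' u u' := by
  rcases h with h | ⟨i, g, hg, h⟩
  · exact Or.inl h
  · exact Or.inr ⟨i, g, hBC hg, h⟩

lemma Corresponds.isLeft_eq {ι : Type*} {B C : Finset GQ} {f f' : ℍ → ℂ} {v v' : ι → ℍ ⊕ ℂ}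
    {u u' : ℍ ⊕ ℂ} (hu : Corresponds C v v' u u') (hv : Similar B f f' v v') :
    u.isLeft = u'.isLeft := by
  rcases hu with ⟨c, rfl, rfl⟩ | ⟨i, g, hg, hi, rfl, rfl⟩
  · rfl
  · rw [isLeft_carAct, isLeft_carAct, hv.side]

lemma Corresponds.eq_iff {ι : Type*} {B C D : Finset GQ} {f f' : ℍ → ℂ} {v v' : ι → ℍ ⊕ ℂ}
    {u u' w w' : ℍ ⊕ ℂ} (hv : Similar D f f' v v') (hu : Corresponds B v v' u u')
    (hw : Corresponds C v v' w w') (hD : C⁻¹ * B ⊆ D) : u = w ↔ u' = w' := by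
  rcases hu with ⟨c, rfl, rfl⟩ | ⟨i, g, hg, hi, rfl, rfl⟩ <;>
    rcases hw with ⟨d, rfl, rfl⟩ | ⟨k, b, hb, hk, rfl, rfl⟩
  · rfl
  · have hk' := hk
    rw [hv.side] at hk'
    obtain ⟨x, hx⟩ := Sum.isLeft_iff.1 hk
    obtain ⟨x', hx'⟩ := Sum.isLeft_iff.1 hk'
    simp [hx, hx']
  · have hi' := hi
    rw [hv.side] at hi'
    obtain ⟨x, hx⟩ := Sum.isLeft_iff.1 hi
    obtain ⟨x', hx'⟩ := Sum.isLeft_iff.1 hi'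
    simp [hx, hx']
  · have := hv.rel i k (b⁻¹ * g) (hD (Finset.mul_mem_mul (Finset.inv_mem_inv hb) hg))
    simpa only [carAct_mul, carAct_eq_iff (g := b⁻¹), inv_inv] using this

lemma Corresponds.carBin {ι : Type*} {B : Finset GQ} {f f' : ℍ → ℂ} {v v' : ι → ℍ ⊕ ℂ}
    {u u' w w' : ℍ ⊕ ℂ} (hv : Similar B f f' v v') (op : ℂ → ℂ → ℂ)
    (hu : Corresponds B v v' u u') (hw : Corresponds B v v' w w') :
    Corresponds B v v' (carBin op u w) (carBin op u' w') := by
  have hleft {i} (hi : (v i).isLeft) (g : GQ) : ∃ x x', carAct g (v i) = Sum.inl x ∧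
      carAct g (v' i) = Sum.inl x' := by
    have hi' := hi
    rw [hv.side] at hi'
    obtain ⟨x, hx⟩ := Sum.isLeft_iff.1 hi
    obtain ⟨x', hx'⟩ := Sum.isLeft_iff.1 hi'
    exact ⟨g • x, g • x', by rw [hx, carAct_inl], by rw [hx', carAct_inl]⟩
  rcases hu with ⟨c, rfl, rfl⟩ | ⟨i, g, hg, hi, rfl, rfl⟩
  · rcases hw with ⟨d, rfl, rfl⟩ | ⟨i, g, hg, hi, rfl, rfl⟩
    · exact Or.inl ⟨op c d, rfl, rfl⟩
    · obtain ⟨x, x', hx, hx'⟩ := hleft hi g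
      rw [hx, hx']
      exact Or.inl ⟨c, rfl, rfl⟩
  · refine Or.inr ⟨i, g, hg, hi, ?_⟩
    obtain ⟨x, x', hx, hx'⟩ := hleft hi g
    rw [hx, hx']
    exact ⟨rfl, rfl⟩

lemma realize_add {ι : Type*} (f : ℍ → ℂ) (v : ι → ℍ ⊕ ℂ) (ts : Fin 2 → JLang.Term ι) :
    (Term.func (L := JLang) JFun.add ts).realize (M := (twist f).carrier) v =
      carBin (· + ·) ((ts 0).realize (M := (twist f).carrier) v)
        ((ts 1).realize (M := (twist f).carrier) v) := by
  have e (x : Fin 2 → ℍ ⊕ ℂ) : (Structure.funMap (L := JLang) (M := (twist f).carrier)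
      (JFun.add : JFun 2) x : ℍ ⊕ ℂ) = carBin (· + ·) (x 0) (x 1) := by
    obtain ⟨u, w, rfl⟩ : ∃ u w, x = ![u, w] :=
      ⟨x 0, x 1, funext fun i => by fin_cases i <;> rfl⟩
    rcases u with _ | _ <;> rcases w with _ | _ <;> rfl
  exact e fun i => (ts i).realize (M := (twist f).carrier) v

lemma realize_mul {ι : Type*} (f : ℍ → ℂ) (v : ι → ℍ ⊕ ℂ) (ts : Fin 2 → JLang.Term ι) :
    (Term.func (L := JLang) JFun.mul ts).realize (M := (twist f).carrier) v =
      carBin (· * ·) ((ts 0).realize (M := (twist f).carrier) v)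
        ((ts 1).realize (M := (twist f).carrier) v) := by
  have e (x : Fin 2 → ℍ ⊕ ℂ) : (Structure.funMap (L := JLang) (M := (twist f).carrier)
      (JFun.mul : JFun 2) x : ℍ ⊕ ℂ) = carBin (· * ·) (x 0) (x 1) := by
    obtain ⟨u, w, rfl⟩ : ∃ u w, x = ![u, w] :=
      ⟨x 0, x 1, funext fun i => by fin_cases i <;> rfl⟩
    rcases u with _ | _ <;> rcases w with _ | _ <;> rfl
  exact e fun i => (ts i).realize (M := (twist f).carrier) v

/-- The values of a term at two similar tuples correspond. -/
lemma term_similar {ι : Type*} (t : JLang.Term ι) :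
    ∃ B : Finset GQ, ∀ (f f' : ℍ → ℂ) (v v' : ι → ℍ ⊕ ℂ), Similar B f f' v v' →
      Corresponds B v v' (t.realize (M := (twist f).carrier) v)
        (t.realize (M := (twist f').carrier) v') := by
  induction t with
  | var i =>
    refine ⟨{1}, fun f f' v v' h => ?_⟩
    rcases hi : v i with x | c
    · exact Or.inr ⟨i, 1, by simp, by simp [hi], (carAct_one _).symm, (carAct_one _).symm⟩
    · exact Or.inl ⟨c, hi, (h.eq_inr_iff (by simp) i c).1 hi⟩
  | @func l F ts ih =>
    cases F with
    | act g =>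
      obtain ⟨B, hB⟩ := ih 0
      refine ⟨B ∪ {g} * B, fun f f' v v' h => ?_⟩
      rcases hB f f' v v' (h.mono Finset.subset_union_left) with ⟨c, h1, h2⟩ | ⟨i, b, hb, hl, h1, h2⟩
      · refine Or.inl ⟨c, ?_, ?_⟩
        · exact (congrArg (carAct g) h1)
        · exact (congrArg (carAct g) h2)
      · refine Or.inr ⟨i, g * b, Finset.mem_union_right _
          (Finset.mul_mem_mul (by simp) hb), hl, ?_, ?_⟩
        · rw [carAct_mul]
          exact (congrArg (carAct g) h1)
        · rw [carAct_mul]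
          exact (congrArg (carAct g) h2)
    | jmap =>
      obtain ⟨B, hB⟩ := ih 0
      refine ⟨B, fun f f' v v' h => Or.inl ?_⟩
      have e (f : ℍ → ℂ) (u : ℍ ⊕ ℂ) : Sum.elim (fun h => (Sum.inr (f h) : ℍ ⊕ ℂ))
          (fun a => Sum.inr a) u = Sum.inr (carJ f u) := by cases u <;> rfl
      rcases hB f f' v v' h with ⟨c, h1, h2⟩ | ⟨i, b, hb, hl, h1, h2⟩
      · refine ⟨c, (e f _).trans ?_, (e f' _).trans ?_⟩
        · exact (congrArg (fun u => Sum.inr (carJ f u)) h1)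
        · exact (congrArg (fun u => Sum.inr (carJ f' u)) h2)
      · refine ⟨carJ f (carAct b (v i)), (e f _).trans ?_, (e f' _).trans ?_⟩
        · exact (congrArg (fun u => Sum.inr (carJ f u)) h1)
        · rw [h.val i b hb]
          exact (congrArg (fun u => Sum.inr (carJ f' u)) h2)
    | add =>
      obtain ⟨B, hB⟩ := ih 0
      obtain ⟨C, hC⟩ := ih 1
      refine ⟨B ∪ C, fun f f' v v' h => ?_⟩
      rw [realize_add, realize_add]
      exact Corresponds.carBin h (· + ·)
        ((hB f f' v v' (h.mono Finset.subset_union_left)).mono Finset.subset_union_left)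
        ((hC f f' v v' (h.mono Finset.subset_union_right)).mono Finset.subset_union_right)
    | mul =>
      obtain ⟨B, hB⟩ := ih 0
      obtain ⟨C, hC⟩ := ih 1
      refine ⟨B ∪ C, fun f f' v v' h => ?_⟩
      rw [realize_mul, realize_mul]
      exact Corresponds.carBin h (· * ·)
        ((hB f f' v v' (h.mono Finset.subset_union_left)).mono Finset.subset_union_left)
        ((hC f f' v v' (h.mono Finset.subset_union_right)).mono Finset.subset_union_right)
    | zero => exact ⟨∅, fun f f' v v' _ => Or.inl ⟨0, rfl, rfl⟩⟩
    | one => exact ⟨∅, fun f f' v v' _ => Or.inl ⟨1, rfl, rfl⟩⟩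

/-- The hypothesis under which elements can be added to a pair of similar tuples: the two maps
agree at special points, and finitely many values of the first map on an orbit are attained
infinitely often by the second one. -/
def Extendable (f f' : ℍ → ℂ) : Prop :=
  (∀ x, IsSpecial x → f x = f' x) ∧
    ∀ (x : ℍ) (B : Finset GQ), {x' : ℍ | ∀ b ∈ B, f' (b • x') = f (b • x)}.Infinite

lemma isSpecial_smul {x : ℍ} (hx : IsSpecial x) (h : GQ) : IsSpecial (h • x) := by
  obtain ⟨g, hg, hgx⟩ := hx
  refine ⟨h * g * h⁻¹, by simpa using hg, ?_⟩
  have hgx : g • x = x := hgx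
  change (h * g * h⁻¹) • h • x = h • x
  rw [mul_smul, inv_smul_smul, mul_smul, hgx]

/-- The translates used when an element is added to a pair of similar tuples. -/
def closureSet (B : Finset GQ) : Finset GQ := insert 1 (B ∪ B⁻¹)

lemma exists_far_companion {ι : Type*} [Finite ι] {B : Finset GQ} {f f' : ℍ → ℂ}
    {v v' : ι → ℍ ⊕ ℂ} (hff : Extendable f f')
    (h : Similar (closureSet B * closureSet B * closureSet B) f f' v v') {x : ℍ}
    (hfar : ∀ i, ∀ c ∈ closureSet B, carAct c (v i) ≠ Sum.inl x) :
    ∃ x' : ℍ, (∀ b ∈ B, f (b • x) = f' (b • x')) ∧ (∀ b ∈ B, b • x = x ↔ b • x' = x') ∧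
      ∀ i, ∀ c ∈ closureSet B, carAct c (v' i) ≠ Sum.inl x' := by
  by_cases hfix : ∃ b ∈ B, b ≠ 1 ∧ b • x = x
  · obtain ⟨b, hb, hb1, hbx⟩ := hfix
    have hsp : IsSpecial x := ⟨b, hb1, hbx⟩
    refine ⟨x, fun h _ => hff.1 _ (isSpecial_smul hsp h), fun _ _ => Iff.rfl, ?_⟩
    intro i c hc hcx
    have hb' : b ∈ closureSet B := by simp [closureSet, hb]
    have hc' : c⁻¹ ∈ closureSet B := by
      simp only [closureSet, Finset.mem_insert, Finset.mem_union, Finset.mem_inv', inv_inv,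
        inv_eq_one] at hc ⊢
      tauto
    have hrel := h.rel i i (c⁻¹ * b * c) (Finset.mul_mem_mul (Finset.mul_mem_mul hc' hb') hc)
    have hz' : v' i = Sum.inl (c⁻¹ • x) := by rw [carAct_eq_iff] at hcx; exact hcx
    have hl : (v i).isLeft := by rw [h.side, hz']; rfl
    obtain ⟨z, hz⟩ := Sum.isLeft_iff.1 hl
    rw [hz, hz'] at hrel
    simp only [carAct_inl, Sum.inl.injEq, mul_smul, smul_inv_smul, hbx, iff_true] at hrel
    have hfz : (c⁻¹ * b * c) • z = z := by rw [mul_smul, mul_smul, hrel]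
    have hfx : (c⁻¹ * b * c) • (c⁻¹ • x) = c⁻¹ • x := by
      rw [mul_smul, mul_smul, smul_inv_smul, hbx]
    have hne : c⁻¹ * b * c ≠ 1 := by
      intro e
      apply hb1
      have : b = c * (c⁻¹ * b * c) * c⁻¹ := by group
      rw [this, e]
      simp
    have := eq_of_gq_fixed hne hfz hfx
    apply hfar i c hc
    rw [hz, this, carAct_inl, smul_inv_smul]
  · push Not at hfix
    have hfin1 : (⋃ i, ⋃ c ∈ closureSet B, {x' : ℍ | carAct c (v' i) = Sum.inl x'}).Finite := by
      refine Set.finite_iUnion fun i => Set.Finite.biUnion (Finset.finite_toSet _) fun c _ => ?_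
      refine Set.Subsingleton.finite fun a ha b hb => ?_
      exact Sum.inl_injective (ha.symm.trans hb)
    have hfin2 : (⋃ b ∈ B, {x' : ℍ | b ≠ 1 ∧ b • x' = x'}).Finite := by
      refine Set.Finite.biUnion (Finset.finite_toSet _) fun b _ => ?_
      exact Set.Subsingleton.finite fun p hp q hq => eq_of_gq_fixed hp.1 hp.2 hq.2
    obtain ⟨x', hx', hnot⟩ := ((hff.2 x B).sdiff (hfin1.union hfin2)).nonempty
    simp only [Set.mem_union, Set.mem_iUnion, Set.mem_ofPred_eq, not_or, not_exists,
      not_and] at hnot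
    refine ⟨x', fun b hb => (hx' b hb).symm, fun b hb => ?_, hnot.1⟩
    by_cases hb1 : b = 1
    · simp [hb1]
    · exact iff_of_false (hfix b hb hb1) (hnot.2 b hb hb1)

/-- Elements can be added to similar tuples. -/
lemma Similar.exists_extension {ι : Type*} [Finite ι] {B : Finset GQ} {f f' : ℍ → ℂ}
    {v v' : ι → ℍ ⊕ ℂ} (hff : Extendable f f')
    (h : Similar (closureSet B * closureSet B * closureSet B) f f' v v') (u : ℍ ⊕ ℂ) :
    ∃ u' : ℍ ⊕ ℂ, Similar B f f' (fun o : Option ι => o.elim u v)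
      (fun o : Option ι => o.elim u' v') := by
  have h1 : (1 : GQ) ∈ closureSet B := by simp [closureSet]
  have hinv {c : GQ} (hc : c ∈ closureSet B) : c⁻¹ ∈ closureSet B := by
    simp only [closureSet, Finset.mem_insert, Finset.mem_union, Finset.mem_inv', inv_inv,
      inv_eq_one] at hc ⊢
    tauto
  have hB {b : GQ} (hb : b ∈ B) : b ∈ closureSet B := by simp [closureSet, hb]
  have hmem {a b c : GQ} (ha : a ∈ closureSet B) (hb : b ∈ closureSet B)
      (hc : c ∈ closureSet B) : a * b * c ∈ closureSet B * closureSet B * closureSet B :=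
    Finset.mul_mem_mul (Finset.mul_mem_mul ha hb) hc
  have hB3 : B ⊆ closureSet B * closureSet B * closureSet B := fun b hb => by
    simpa using hmem h1 h1 (hB hb)
  have h13 : (1 : GQ) ∈ closureSet B * closureSet B * closureSet B := by
    simpa using hmem h1 h1 h1
  have hold := h.mono hB3
  suffices hs : ∃ u' : ℍ ⊕ ℂ, u.isLeft = u'.isLeft ∧
      (∀ b ∈ B, carJ f (carAct b u) = carJ f' (carAct b u')) ∧
      (∀ b ∈ B, carAct b u = u ↔ carAct b u' = u') ∧
      (∀ k, ∀ b ∈ B, carAct b u = v k ↔ carAct b u' = v' k) ∧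
      (∀ k, ∀ b ∈ B, carAct b (v k) = u ↔ carAct b (v' k) = u') by
    obtain ⟨u', s1, s2, s3, s4, s5⟩ := hs
    refine ⟨u', ?_, ?_, ?_⟩
    · rintro (_ | i)
      exacts [s1, h.side i]
    · rintro (_ | i)
      exacts [s2, hold.val i]
    · rintro (_ | i) (_ | k)
      exacts [s3, s4 k, s5 i, hold.rel i k]
  rcases u with x | c
  · by_cases hnear : ∃ i, ∃ c ∈ closureSet B, carAct c (v i) = Sum.inl x
    · obtain ⟨i, c, hc, hcx⟩ := hnear
      rw [← hcx]
      refine ⟨carAct c (v' i), by simp [h.side], fun b hb => ?_, fun b hb => ?_, fun k b hb => ?_,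
        fun k b hb => ?_⟩
      · rw [← carAct_mul, ← carAct_mul]
        exact h.val i _ (by simpa using hmem h1 (hB hb) hc)
      · have := h.rel i i (c⁻¹ * b * c) (hmem (hinv hc) (hB hb) hc)
        simpa only [carAct_mul, carAct_eq_iff (g := c⁻¹), inv_inv] using this
      · have := h.rel i k (b * c) (by simpa using hmem h1 (hB hb) hc)
        simpa only [carAct_mul] using this
      · have := h.rel k i (c⁻¹ * b) (by simpa using hmem h1 (hinv hc) (hB hb))
        simpa only [carAct_mul, carAct_eq_iff (g := c⁻¹), inv_inv] using this
    · push Not at hnear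
      obtain ⟨x', g1, g2, g3⟩ := exists_far_companion hff h hnear
      refine ⟨Sum.inl x', rfl, g1, fun b hb => by simpa using g2 b hb, fun k b hb => ?_,
        fun k b hb => iff_of_false (hnear k b (hB hb)) (g3 k b (hB hb))⟩
      rw [carAct_eq_iff, carAct_eq_iff]
      exact iff_of_false (fun e => hnear k _ (hinv (hB hb)) e.symm)
        (fun e => g3 k _ (hinv (hB hb)) e.symm)
  · have key (k : ι) := h.eq_inr_iff h13 k c
    refine ⟨Sum.inr c, rfl, fun b _ => rfl, fun b _ => by simp, fun k b _ => ?_, fun k b _ => ?_⟩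
    · simpa [eq_comm] using key k
    · simpa [carAct_eq_iff] using key k

/-- Realization of a first-order formula depends only on the similarity class with respect to a
finite subset of `G`. -/
lemma boundedFormula_similar {α : Type} [Finite α] {n : ℕ} (φ : JLang.BoundedFormula α n) :
    ∃ B : Finset GQ, ∀ (f f' : ℍ → ℂ), Extendable f f' → Extendable f' f →
      ∀ (v v' : α → ℍ ⊕ ℂ) (xs xs' : Fin n → ℍ ⊕ ℂ),
        Similar B f f' (Sum.elim v xs) (Sum.elim v' xs') →
        (φ.Realize (M := (twist f).carrier) v xs ↔ φ.Realize (M := (twist f').carrier) v' xs') := by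
  induction φ with
  | falsum => exact ⟨∅, fun _ _ _ _ _ _ _ _ _ => Iff.rfl⟩
  | @equal n t s =>
    obtain ⟨B, hB⟩ := term_similar t
    obtain ⟨C, hC⟩ := term_similar s
    refine ⟨B ∪ C ∪ C⁻¹ * B, fun f f' _ _ v v' xs xs' h => ?_⟩
    exact Corresponds.eq_iff h
      (hB f f' _ _ (h.mono (Finset.subset_union_left.trans Finset.subset_union_left)))
      (hC f f' _ _ (h.mono (Finset.subset_union_right.trans Finset.subset_union_left)))
      Finset.subset_union_right
  | @rel n l R ts =>
    cases R
    obtain ⟨B, hB⟩ := term_similar (ts 0)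
    refine ⟨B, fun f f' _ _ v v' xs xs' h => ?_⟩
    exact iff_of_eq (congrArg (· = true) ((hB f f' _ _ h).isLeft_eq h))
  | @imp n φ ψ ih1 ih2 =>
    obtain ⟨B, hB⟩ := ih1
    obtain ⟨C, hC⟩ := ih2
    refine ⟨B ∪ C, fun f f' h1 h2 v v' xs xs' h => ?_⟩
    exact imp_congr (hB f f' h1 h2 v v' xs xs' (h.mono Finset.subset_union_left))
      (hC f f' h1 h2 v v' xs xs' (h.mono Finset.subset_union_right))
  | @all n φ ih =>
    obtain ⟨B, hB⟩ := ih
    refine ⟨closureSet B * closureSet B * closureSet B, fun f f' h1 h2 v v' xs xs' h => ?_⟩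
    have hsnoc (w : α → ℍ ⊕ ℂ) (ys : Fin n → ℍ ⊕ ℂ) (u : ℍ ⊕ ℂ) :
        Sum.elim w (Fin.snoc ys u : Fin (n + 1) → ℍ ⊕ ℂ) =
          (fun o : Option (α ⊕ Fin n) => o.elim u (Sum.elim w ys)) ∘
            Sum.elim (fun a => some (Sum.inl a))
              (Fin.snoc (fun i => some (Sum.inr i)) none : Fin (n + 1) → Option (α ⊕ Fin n)) := by
      ext1 (a | i)
      · rfl
      · refine Fin.lastCases ?_ (fun i => ?_) i <;> simp
    change (∀ u : ℍ ⊕ ℂ, φ.Realize (M := (twist f).carrier) v (Fin.snoc xs u)) ↔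
      ∀ u : ℍ ⊕ ℂ, φ.Realize (M := (twist f').carrier) v' (Fin.snoc xs' u)
    constructor
    · intro H u'
      obtain ⟨u, hu⟩ := h.symm.exists_extension h2 u'
      refine (hB f f' h1 h2 v v' (Fin.snoc xs u) (Fin.snoc xs' u') ?_).1 (H u)
      rw [hsnoc, hsnoc]
      exact hu.symm.comp _
    · intro H u
      obtain ⟨u', hu⟩ := h.exists_extension h1 u
      refine (hB f f' h1 h2 v v' (Fin.snoc xs u) (Fin.snoc xs' u') ?_).2 (H u')
      rw [hsnoc, hsnoc]
      exact hu.comp _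

/-! ### Limits of tuples of elements of `SL₂(ℤ)` -/

open Filter

lemma jFunction_sl2ZHom_smul (γ : SL(2, ℤ)) (x : ℍ) :
    jFunction (sl2ZHom γ • x) = jFunction x := by
  rw [sl2ZHom_smul, jFunction_smul]

/-- The subgroup of `SL₂(ℤ)ⁿ` of tuples congruent to `1` modulo `m!`. -/
def level (n m : ℕ) : Subgroup (Fin n → SL(2, ℤ)) :=
  Subgroup.pi Set.univ fun _ => CongruenceSubgroup.Gamma m.factorial

lemma mem_level {n m : ℕ} {ε : Fin n → SL(2, ℤ)} :
    ε ∈ level n m ↔ ∀ i, ε i ∈ CongruenceSubgroup.Gamma m.factorial := by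
  simp [level, Subgroup.mem_pi]

lemma Gamma_le_of_dvd {M N : ℕ} (h : N ∣ M) :
    CongruenceSubgroup.Gamma M ≤ CongruenceSubgroup.Gamma N := by
  intro γ hγ
  rw [CongruenceSubgroup.Gamma_mem] at hγ ⊢
  have key (a : ℤ) : ((a : ZMod M).cast : ZMod N) = a := ZMod.cast_intCast h a
  have one : ((1 : ZMod M).cast : ZMod N) = 1 := ZMod.cast_one h
  have zero : ((0 : ZMod M).cast : ZMod N) = 0 := ZMod.cast_zero
  obtain ⟨h1, h2, h3, h4⟩ := hγ
  refine ⟨?_, ?_, ?_, ?_⟩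
  · rw [← key, h1, one]
  · rw [← key, h2, zero]
  · rw [← key, h3, zero]
  · rw [← key, h4, one]

lemma level_antitone (n : ℕ) : Antitone (level n) := by
  intro a b hab ε hε
  rw [mem_level] at hε ⊢
  exact fun i => Gamma_le_of_dvd (Nat.factorial_dvd_factorial hab) (hε i)

/-- The function `j` on the translates by a finite set is invariant under a congruence subgroup. -/
lemma exists_jFunction_invariant (B : Finset GQ) :
    ∃ m : ℕ, ∀ γ ∈ CongruenceSubgroup.Gamma m.factorial, ∀ b ∈ B, ∀ x : ℍ,
      jFunction (b • sl2ZHom γ • x) = jFunction (b • x) := by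
  choose N hN0 hN using exists_Gamma_conj
  refine ⟨B.sup N, fun γ hγ b hb x => ?_⟩
  have hdvd : N b ∣ (B.sup N).factorial :=
    Nat.dvd_factorial (Nat.pos_of_ne_zero (hN0 b)) (Finset.le_sup hb)
  obtain ⟨δ, hδ⟩ := hN b γ (Gamma_le_of_dvd hdvd hγ)
  rw [← mul_smul, hδ, mul_smul, jFunction_sl2ZHom_smul]

lemma T_pow_mem_Gamma (k N : ℕ) : ModularGroup.T ^ (k * N) ∈ CongruenceSubgroup.Gamma N := by
  rw [CongruenceSubgroup.Gamma_mem, ← zpow_natCast, ModularGroup.coe_T_zpow]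
  simp

lemma T_pow_smul_injective (N : ℕ) (hN : N ≠ 0) (u : ℍ) :
    Function.Injective fun k : ℕ => sl2ZHom (ModularGroup.T ^ (k * N)) • u := by
  intro a b hab
  have key (k : ℕ) : sl2ZHom (ModularGroup.T ^ (k * N)) • u = ((k * N : ℕ) : ℝ) +ᵥ u := by
    have := UpperHalfPlane.modular_T_zpow_smul u (k * N : ℕ)
    rw [zpow_natCast] at this
    rw [sl2ZHom_smul, this, Int.cast_natCast]
  simp only [key] at hab
  have := congrArg UpperHalfPlane.re hab
  simp only [UpperHalfPlane.vadd_re, add_left_inj, Nat.cast_inj] at this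
  exact Nat.eq_of_mul_eq_mul_right (Nat.pos_of_ne_zero hN) this

lemma infinite_jFunction_companions {f : ℍ → ℂ} {x u : ℍ} {B : Finset GQ}
    (hu : ∀ b ∈ B, jFunction (b • u) = f (b • x)) :
    {x' : ℍ | ∀ b ∈ B, jFunction (b • x') = f (b • x)}.Infinite := by
  obtain ⟨m, hm⟩ := exists_jFunction_invariant B
  refine Set.infinite_of_injective_forall_mem
    (T_pow_smul_injective m.factorial (Nat.factorial_ne_zero m) u) fun k b hb => ?_
  rw [hm _ (T_pow_mem_Gamma k _) b hb, hu b hb]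

lemma extendable_jFunction : Extendable jFunction jFunction :=
  ⟨fun _ _ => rfl, fun _ _ => infinite_jFunction_companions fun _ _ => rfl⟩

/-- A tuple in `ℍ` is free if the only relation between its entries given by an element of `G`
is the trivial one. -/
def IsFree {n : ℕ} (x : Fin n → ℍ) : Prop :=
  ∀ (i k : Fin n) (g : GQ), g • x i = x k → i = k ∧ g = 1

lemma IsFree.smul {n : ℕ} {x : Fin n → ℍ} (hx : IsFree x) (a : Fin n → GQ) :
    IsFree fun i => a i • x i := by
  intro i k g h
  have h' : ((a k)⁻¹ * g * a i) • x i = x k := by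
    rw [mul_smul, mul_smul, h, inv_smul_smul]
  obtain ⟨rfl, h1⟩ := hx i k _ h'
  refine ⟨rfl, ?_⟩
  have : g = a i * ((a i)⁻¹ * g * a i) * (a i)⁻¹ := by group
  rw [this, h1, mul_one, mul_inv_cancel]

lemma IsFree.similar {n : ℕ} {x x' : Fin n → ℍ} (hx : IsFree x) (hx' : IsFree x')
    {B : Finset GQ} {f f' : ℍ → ℂ} (h : ∀ i, ∀ b ∈ B, f (b • x i) = f' (b • x' i)) :
    Similar B f f' (fun i => Sum.inl (x i)) (fun i => Sum.inl (x' i)) where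
  side _ := rfl
  val i b hb := h i b hb
  rel i k b _ := by
    simp only [carAct_inl, Sum.inl.injEq]
    constructor
    · intro hb
      obtain ⟨rfl, rfl⟩ := hx i k b hb
      exact one_smul _ _
    · intro hb
      obtain ⟨rfl, rfl⟩ := hx' i k b hb
      exact one_smul _ _

lemma formula_similar {α : Type} [Finite α] (φ : JLang.Formula α) :
    ∃ B : Finset GQ, ∀ (f f' : ℍ → ℂ), Extendable f f' → Extendable f' f →
      ∀ v v' : α → ℍ ⊕ ℂ, Similar B f f' v v' →
        (φ.Realize (M := (twist f).carrier) v ↔ φ.Realize (M := (twist f').carrier) v') := by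
  obtain ⟨B, hB⟩ := boundedFormula_similar φ
  have key (w : α → ℍ ⊕ ℂ) (xs : Fin 0 → ℍ ⊕ ℂ) :
      Sum.elim w xs = w ∘ Sum.elim id Fin.elim0 := by
    ext (i | i)
    · rfl
    · exact i.elim0
  refine ⟨B, fun f f' h h' v v' hv => ?_⟩
  have sim (xs xs' : Fin 0 → ℍ ⊕ ℂ) : Similar B f f' (Sum.elim v xs) (Sum.elim v' xs') := by
    rw [key v, key v']
    exact hv.comp _
  exact hB f f' h h' v v' _ _ (sim _ _)

/-- A sequence in `SL₂(ℤ)ⁿ` converging in the profinite completion. -/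
def IsCauchy {n : ℕ} (γ : ℕ → Fin n → SL(2, ℤ)) : Prop :=
  ∀ l L, l ≤ L → (γ l)⁻¹ * γ L ∈ level n l

/-- A function which agrees with `j` outside the `G`-orbits of the entries of `τ` and which
takes the eventual values of `j` at `g γₗ τ` at the points `g τ` of these orbits. -/
structure IsLimit {n : ℕ} (τ : Fin n → ℍ) (γ : ℕ → Fin n → SL(2, ℤ)) (f : ℍ → ℂ) : Prop where
  eventually : ∀ i (g : GQ), ∀ᶠ l in atTop, f (g • τ i) = jFunction (g • sl2ZHom (γ l i) • τ i)
  off : ∀ y, (∀ i (g : GQ), y ≠ g • τ i) → f y = jFunction y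

section Limit

variable {n : ℕ} {τ : Fin n → ℍ} {γ : ℕ → Fin n → SL(2, ℤ)} {f : ℍ → ℂ}

lemma conj_mem_Gamma {N : ℕ} (γ : SL(2, ℤ)) {ε : SL(2, ℤ)}
    (hε : ε ∈ CongruenceSubgroup.Gamma N) : γ * ε * γ⁻¹ ∈ CongruenceSubgroup.Gamma N :=
  (CongruenceSubgroup.Gamma_normal N).conj_mem ε hε γ

lemma IsCauchy.eventually_eq (hγ : IsCauchy γ) (g : GQ) (i : Fin n) (x : ℍ) :
    ∃ c, ∀ᶠ l in atTop, c = jFunction (g • sl2ZHom (γ l i) • x) := by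
  obtain ⟨m, hm⟩ := exists_jFunction_invariant {g}
  refine ⟨jFunction (g • sl2ZHom (γ m i) • x), eventually_atTop.2 ⟨m, fun l hl => ?_⟩⟩
  have h := conj_mem_Gamma (γ m i) (mem_level.1 (hγ m l hl) i)
  have := hm _ h g (by simp) (sl2ZHom (γ m i) • x)
  rw [← this, ← mul_smul (sl2ZHom _) (sl2ZHom _), ← map_mul]
  simp

lemma IsCauchy.exists_isLimit (hτ : IsFree τ) (hγ : IsCauchy γ) : ∃ f, IsLimit τ γ f := by
  choose c hc using fun (i : Fin n) (g : GQ) => hγ.eventually_eq g i (τ i)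
  refine ⟨fun y => if h : ∃ p : Fin n × GQ, y = p.2 • τ p.1 then c h.choose.1 h.choose.2
    else jFunction y, fun i g => ?_, fun y hy => ?_⟩
  · have h : ∃ p : Fin n × GQ, g • τ i = p.2 • τ p.1 := ⟨(i, g), rfl⟩
    have hs := h.choose_spec
    set p := h.choose with hp
    have hs' : (p.2⁻¹ * g) • τ i = τ p.1 := by rw [mul_smul, hs, inv_smul_smul]
    obtain ⟨hi, hg⟩ := hτ _ _ _ hs'
    rw [dif_pos h, ← hp, ← hi, ← inv_mul_eq_one.1 hg]
    exact hc i _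
  · refine dif_neg ?_
    rintro ⟨p, hp⟩
    exact hy _ _ hp

lemma orbit_cases (τ : Fin n → ℍ) (y : ℍ) :
    (∃ i, ∃ g : GQ, y = g • τ i) ∨ ∀ i (g : GQ), y ≠ g • τ i := by
  by_contra! h
  obtain ⟨h1, i, g, h2⟩ := h
  exact h1 i g h2

lemma off_smul {y : ℍ} (hy : ∀ i (g : GQ), y ≠ g • τ i) (b : GQ) (i : Fin n) (g : GQ) :
    b • y ≠ g • τ i := by
  intro h
  apply hy i (b⁻¹ * g)
  rw [mul_smul, ← h, inv_smul_smul]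

lemma IsFree.off_of_isSpecial (hτ : IsFree τ) {y : ℍ} (hy : IsSpecial y) (i : Fin n) (g : GQ) :
    y ≠ g • τ i := by
  rintro rfl
  obtain ⟨h, h1, h2⟩ := hy
  have := ((hτ.smul fun _ => g) i i h h2).2
  exact h1 this

lemma IsLimit.extendable_left (hf : IsLimit τ γ f) (hτ : IsFree τ) : Extendable f jFunction := by
  refine ⟨fun x hx => hf.off x (hτ.off_of_isSpecial hx), fun x B => ?_⟩
  rcases orbit_cases τ x with ⟨i, g, rfl⟩ | hx
  · have h : ∀ᶠ l in atTop, ∀ b ∈ B,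
        f ((b * g) • τ i) = jFunction ((b * g) • sl2ZHom (γ l i) • τ i) :=
      (Finset.eventually_all B).2 fun b _ => hf.eventually i (b * g)
    obtain ⟨l, hl⟩ := h.exists
    refine infinite_jFunction_companions (u := g • sl2ZHom (γ l i) • τ i) fun b hb => ?_
    rw [← mul_smul, ← mul_smul b, hl b hb]
  · exact infinite_jFunction_companions (u := x) fun b _ => (hf.off _ (off_smul hx b)).symm

lemma IsLimit.extendable_right (hf : IsLimit τ γ f) (hγ : IsCauchy γ) (hτ : IsFree τ) :
    Extendable jFunction f := by
  refine ⟨fun x hx => (hf.off x (hτ.off_of_isSpecial hx)).symm, fun x B => ?_⟩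
  rcases orbit_cases τ x with ⟨i, g, rfl⟩ | hx
  · obtain ⟨m, hm⟩ := exists_jFunction_invariant (B.image (· * g))
    refine Set.infinite_of_injective_forall_mem ((MulAction.injective g).comp
      (T_pow_smul_injective m.factorial (Nat.factorial_ne_zero m) (sl2ZHom (γ m i)⁻¹ • τ i)))
      fun k b hb => ?_
    obtain ⟨l, hl, hml⟩ := ((hf.eventually i
      (b * g * sl2ZHom (ModularGroup.T ^ (k * m.factorial)) * sl2ZHom (γ m i)⁻¹)).and
        (eventually_ge_atTop m)).exists
    have hε := mem_level.1 (hγ m l hml) i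
    have hbg : b * g ∈ B.image (· * g) := Finset.mem_image_of_mem _ hb
    have h1 := hm _ (T_pow_mem_Gamma k _) _ hbg (sl2ZHom ((γ m)⁻¹ i * γ l i) • τ i)
    have h2 := hm _ hε _ hbg (τ i)
    simp only [Function.comp_apply, Pi.mul_apply, map_mul, mul_smul, Pi.inv_apply] at h1 h2 hl ⊢
    rw [hl, h1, h2]
  · obtain ⟨m, hm⟩ := exists_jFunction_invariant B
    refine Set.infinite_of_injective_forall_mem
      (T_pow_smul_injective m.factorial (Nat.factorial_ne_zero m) x) fun k b hb => ?_
    rw [hf.off _ (off_smul (off_smul hx _) b), hm _ (T_pow_mem_Gamma k _) b hb]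

lemma IsLimit.standardFibres (hf : IsLimit τ γ f) (hτ : IsFree τ) : StandardFibres (twist f) := by
  have mixed {i : Fin n} {g : GQ} {y : ℍ} (hy : ∀ i (g : GQ), y ≠ g • τ i)
      (h : f (g • τ i) = f y) : False := by
    obtain ⟨l, hl⟩ := (hf.eventually i g).exists
    rw [hf.off y hy, hl, eq_comm, jFunction_eq_iff] at h
    obtain ⟨δ, hδ⟩ := h
    apply hy i (sl2ZHom δ * g * sl2ZHom (γ l i))
    rw [mul_smul, mul_smul, hδ]
  intro (x : ℍ) (y : ℍ) (hxy : f x = f y)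
  change ∃ δ : SL(2, ℤ), sl2ZHom δ • y = x
  rcases orbit_cases τ x with ⟨i, g, rfl⟩ | hx <;> rcases orbit_cases τ y with ⟨k, h, rfl⟩ | hy
  · obtain ⟨l, hl, hl'⟩ := ((hf.eventually i g).and (hf.eventually k h)).exists
    rw [hl, hl', jFunction_eq_iff] at hxy
    obtain ⟨δ, hδ⟩ := hxy
    have hδ' : (g⁻¹ * sl2ZHom δ * h) • sl2ZHom (γ l k) • τ k = sl2ZHom (γ l i) • τ i := by
      rw [mul_smul, mul_smul, hδ, inv_smul_smul]
    obtain ⟨rfl, h1⟩ := hτ.smul (fun i => sl2ZHom (γ l i)) k i _ hδ'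
    refine ⟨δ, ?_⟩
    rw [← mul_smul]
    congr 1
    rwa [mul_assoc, inv_mul_eq_one, eq_comm] at h1
  · exact (mixed hy hxy).elim
  · exact (mixed hx hxy.symm).elim
  · rwa [hf.off x hx, hf.off y hy, jFunction_eq_iff] at hxy

lemma IsLimit.apply_eq (hf : IsLimit τ γ f) (i : Fin n) : f (τ i) = jFunction (τ i) := by
  obtain ⟨l, hl⟩ := (hf.eventually i 1).exists
  rwa [one_smul, one_smul, jFunction_sl2ZHom_smul] at hl

end Limit

lemma modelsThJ_twist {f : ℍ → ℂ} (h : Extendable f jFunction) (h' : Extendable jFunction f) :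
    ModelsThJ (twist f) := by
  refine (Theory.model_iff _).2 fun φ hφ => ?_
  obtain ⟨B, hB⟩ := formula_similar φ
  have hstd : stdModel.carrier ⊨ φ := hφ
  exact (hB f jFunction h h' _ _ ⟨isEmptyElim, isEmptyElim, isEmptyElim⟩).2 hstd

/-! ### The types of tuples above a fibre -/

/-- The complete type of a tuple of `ℍ` in the structure with `f` in place of `j`. -/
def typeAt {n : ℕ} (f : ℍ → ℂ) (x : Fin n → ℍ) : Set (JLang.Formula (Fin n)) :=
  {φ | φ.Realize (M := (twist f).carrier) fun i => (Sum.inl (x i) : ℍ ⊕ ℂ)}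

/-- The complete type in the standard model of a translate of a tuple by elements of `SL₂(ℤ)`. -/
def translateType {n : ℕ} (τ : Fin n → ℍ) (γ : Fin n → SL(2, ℤ)) : Set (JLang.Formula (Fin n)) :=
  typeAt jFunction fun i => sl2ZHom (γ i) • τ i

section Types

variable {n : ℕ} {τ : Fin n → ℍ}

lemma typeAt_mem_typesAboveFibre {f : ℍ → ℂ} (h : Extendable f jFunction)
    (h' : Extendable jFunction f) (hfib : StandardFibres (twist f))
    (hτ : ∀ i, f (τ i) = jFunction (τ i)) :
    typeAt f τ ∈ typesAboveFibre fun i => jFunction (τ i) := by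
  refine ⟨twist f, modelsThJ_twist h h', hfib, τ, fun φ => ?_, rfl⟩
  obtain ⟨B, hB⟩ := formula_similar φ
  refine hB f jFunction h h' (fun i => Sum.inr (f (τ i))) (fun i => Sum.inr (jFunction (τ i))) ?_
  simp only [hτ]
  exact ⟨fun _ => rfl, fun _ _ _ => rfl, fun _ _ _ _ => Iff.rfl⟩

lemma exists_mem_typesAboveFibre (hτ : IsFree τ) {γ : ℕ → Fin n → SL(2, ℤ)} (hγ : IsCauchy γ) :
    ∃ p ∈ typesAboveFibre fun i => jFunction (τ i),
      ∀ φ, ∀ᶠ l in atTop, φ ∈ p ↔ φ ∈ translateType τ (γ l) := by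
  obtain ⟨f, hf⟩ := hγ.exists_isLimit hτ
  have h := hf.extendable_left hτ
  have h' := hf.extendable_right hγ hτ
  refine ⟨typeAt f τ, typeAt_mem_typesAboveFibre h h' (hf.standardFibres hτ) hf.apply_eq,
    fun φ => ?_⟩
  obtain ⟨B, hB⟩ := formula_similar φ
  have hev : ∀ᶠ l in atTop, ∀ i, ∀ b ∈ B,
      f (b • τ i) = jFunction (b • sl2ZHom (γ l i) • τ i) :=
    eventually_all.2 fun i => (Finset.eventually_all B).2 fun b _ => hf.eventually i b
  filter_upwards [hev] with l hl
  exact hB f jFunction h h' _ _ (hτ.similar (hτ.smul fun i => sl2ZHom (γ l i)) hl)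

lemma mem_translateType_mul_iff (hτ : IsFree τ) (φ : JLang.Formula (Fin n)) :
    ∃ m, ∀ γ, ∀ ε ∈ level n m, φ ∈ translateType τ (γ * ε) ↔ φ ∈ translateType τ γ := by
  obtain ⟨B, hB⟩ := formula_similar φ
  obtain ⟨m, hm⟩ := exists_jFunction_invariant B
  refine ⟨m, fun γ ε hε => hB jFunction jFunction extendable_jFunction extendable_jFunction _ _
    ((hτ.smul _).similar (hτ.smul _) fun i b hb => ?_)⟩
  have h := hm _ (conj_mem_Gamma (γ i) (mem_level.1 hε i)) b hb (sl2ZHom (γ i) • τ i)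
  rw [← h, ← mul_smul (sl2ZHom _) (sl2ZHom _), ← map_mul]
  simp

lemma mem_translateType_mul_left (φ : JLang.Formula (Fin n)) (δ : Fin n → SL(2, ℤ)) :
    ∃ ψ : JLang.Formula (Fin n), ∀ γ,
      φ ∈ translateType τ (δ * γ) ↔ ψ ∈ translateType τ γ := by
  refine ⟨BoundedFormula.subst φ fun i =>
    Term.func (JFun.act (sl2ZHom (δ i)) : JLang.Functions 1) fun _ => Term.var i, fun γ => ?_⟩
  have h := BoundedFormula.realize_subst (M := (twist jFunction).carrier) (φ := φ)
    (tf := fun i => Term.func (JFun.act (sl2ZHom (δ i)) : JLang.Functions 1) fun _ => Term.var i)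
    (v := fun i => (Sum.inl (sl2ZHom (γ i) • τ i) : ℍ ⊕ ℂ)) (xs := default)
  refine Iff.trans ?_ h.symm
  have e : (fun i => (Sum.inl (sl2ZHom ((δ * γ) i) • τ i) : ℍ ⊕ ℂ)) =
      fun i => Sum.inl (sl2ZHom (δ i) • sl2ZHom (γ i) • τ i) := by
    funext i
    rw [Pi.mul_apply, map_mul, mul_smul]
  change φ.Realize (M := (twist jFunction).carrier)
    (fun i => (Sum.inl (sl2ZHom ((δ * γ) i) • τ i) : ℍ ⊕ ℂ)) ↔ _
  rw [e]
  exact Iff.rfl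

lemma translateType_mul_left {γ γ' : Fin n → SL(2, ℤ)}
    (h : translateType τ γ = translateType τ γ') (δ : Fin n → SL(2, ℤ)) :
    translateType τ (δ * γ) = translateType τ (δ * γ') := by
  ext φ
  obtain ⟨ψ, hψ⟩ := mem_translateType_mul_left (τ := τ) φ δ
  rw [hψ, hψ, h]

/-- If the types of the translates do not vary on arbitrarily small cosets, then there are only
finitely many of them. -/
lemma finite_range_translateType {m : ℕ} {γ : Fin n → SL(2, ℤ)}
    (h : ∀ ε ∈ level n m, translateType τ (γ * ε) = translateType τ γ) :
    (Set.range (translateType τ)).Finite := by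
  have h' (δ ε) (hε : ε ∈ level n m) : translateType τ (δ * ε) = translateType τ δ := by
    simpa [← mul_assoc] using translateType_mul_left (h ε hε) (δ * γ⁻¹)
  have : NeZero m.factorial := ⟨Nat.factorial_ne_zero m⟩
  let red : (Fin n → SL(2, ℤ)) → Fin n → SL(2, ZMod m.factorial) :=
    fun δ i => Matrix.SpecialLinearGroup.map (Int.castRingHom (ZMod m.factorial)) (δ i)
  have hred : Function.FactorsThrough (translateType τ) red := by
    intro δ δ' hδ
    rw [← h' δ (δ⁻¹ * δ'), mul_inv_cancel_left]
    refine mem_level.2 fun i => CongruenceSubgroup.Gamma_mem'.2 ?_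
    have := congrFun hδ i
    simp only [red] at this
    rw [Pi.mul_apply, Pi.inv_apply, map_mul, map_inv, this, inv_mul_cancel]
  have hsub : Set.range (translateType τ) ⊆
      Set.range (Function.extend red (translateType τ) fun _ => ∅) := by
    rintro _ ⟨δ, rfl⟩
    exact ⟨red δ, hred.extend_apply _ δ⟩
  exact (Set.finite_range _).subset hsub

/-- The formula expressing that a tuple of the field sort is the image under `j` of a tuple of
the `H`-sort satisfying a given formula. -/
def imageFormula (φ : JLang.Formula (Fin n)) : JLang.Formula (Fin n) :=
  Formula.iExs (Fin n) (φ.relabel Sum.inr ⊓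
    Formula.iInf fun i : Fin n =>
      Relations.formula (L := JLang) (JRel.isH : JLang.Relations 1) (fun _ => Term.var (Sum.inr i)) ⊓
      Term.equal (Term.func (JFun.jmap : JLang.Functions 1) fun _ => Term.var (Sum.inr i))
        (Term.var (Sum.inl i)))

lemma realize_imageFormula (M : JPreModel) (φ : JLang.Formula (Fin n)) (z : Fin n → M.F) :
    (imageFormula φ).Realize (fun i => M.inF (z i)) ↔
      ∃ x : Fin n → M.H, φ.Realize (fun i => M.inH (x i)) ∧ ∀ i, M.j (x i) = z i := by
  have hrel (u : M.carrier) :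
      Structure.RelMap (L := JLang) (JRel.isH : JLang.Relations 1) (fun _ => u) ↔
        ∃ x, u = M.inH x := by
    rcases u with x | c
    · exact ⟨fun _ => ⟨x, rfl⟩, fun _ => rfl⟩
    · exact ⟨fun h => (Bool.false_ne_true h).elim, fun ⟨x, hx⟩ => (Sum.inr_ne_inl hx).elim⟩
  have hfun (x : M.H) (c : M.F) :
      Structure.funMap (L := JLang) (JFun.jmap : JLang.Functions 1) (fun _ => M.inH x) =
        M.inF c ↔ M.j x = c :=
    ⟨fun h => Sum.inr_injective h, fun h => congrArg Sum.inr h⟩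
  simp only [imageFormula, Formula.realize_iExs, Formula.realize_inf, Formula.realize_relabel,
    Formula.realize_iInf, Formula.realize_equal, Term.realize_var, Sum.elim_comp_inr,
    Sum.elim_inl]
  constructor
  · rintro ⟨u, hu, h⟩
    choose x hx using fun i => (hrel (u i)).1 (Formula.realize_rel.1 (h i).1)
    obtain rfl : u = fun i => M.inH (x i) := funext hx
    exact ⟨x, hu, fun i => (hfun _ _).1 (h i).2⟩
  · rintro ⟨x, hx, h⟩
    exact ⟨fun i => M.inH (x i), hx, fun i =>
      ⟨Formula.realize_rel.2 ((hrel _).2 ⟨x i, rfl⟩), (hfun _ _).2 (h i)⟩⟩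

lemma typesAboveFibre_subset (h : (Set.range (translateType τ)).Finite) :
    (typesAboveFibre fun i => jFunction (τ i)) ⊆ Set.range (translateType τ) := by
  rintro _ ⟨M, -, -, τ', hτ', rfl⟩
  by_contra hp
  have hsep (q : Set.range (translateType τ)) : ∃ φ : JLang.Formula (Fin n),
      φ.Realize (fun i => M.inH (τ' i)) ∧ φ ∉ q.1 := by
    by_contra! hq
    apply hp
    obtain ⟨_, γ, rfl⟩ := q
    refine ⟨γ, Set.Subset.antisymm (fun φ hφ => ?_) hq⟩
    by_contra hφ'
    exact hq φ.not hφ' hφ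
  choose φ hφ hφ' using hsep
  have := h.to_subtype
  have hM : (Formula.iInf φ).Realize fun i => M.inH (τ' i) := by
    rw [Formula.realize_iInf]
    exact hφ
  have := (hτ' _).1 ((realize_imageFormula M _ _).2 ⟨τ', hM, fun _ => rfl⟩)
  obtain ⟨x, hx, hjx⟩ := (realize_imageFormula stdModel _ _).1 this
  choose γ hγ using fun i => jFunction_eq_iff.1 (hjx i)
  rw [Formula.realize_iInf] at hx
  apply hφ' ⟨_, γ, rfl⟩
  obtain rfl : (fun i => sl2ZHom (γ i) • τ i) = x := funext hγ
  exact hx _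

end Types

/-! ### Counting -/

/-- A binary tree of refinements of cosets produces continuum many limits. -/
lemma exists_injective_of_splitting {X Φ : Type*} [Group X] {U : ℕ → Subgroup X}
    (hU : Antitone U) {P : X → Set Φ} {T : Set (Set Φ)}
    (hlim : ∀ γ : ℕ → X, (∀ l L, l ≤ L → (γ l)⁻¹ * γ L ∈ U l) →
      ∃ p ∈ T, ∀ φ, ∀ᶠ l in atTop, φ ∈ p ↔ φ ∈ P (γ l))
    (hloc : ∀ φ, ∃ m, ∀ γ, ∀ ε ∈ U m, φ ∈ P (γ * ε) ↔ φ ∈ P γ)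
    (hsplit : ∀ m γ, ∃ ε ∈ U m, P (γ * ε) ≠ P γ) :
    ∃ F : (ℕ → Bool) → T, Function.Injective F := by
  choose m hm using hloc
  choose ε hε hne using hsplit
  have hφ (k : ℕ) (γ : X) : ∃ φ, ¬ (φ ∈ P (γ * ε k γ) ↔ φ ∈ P γ) := by
    by_contra! h
    exact hne k γ (Set.ext h)
  choose φ hφ using hφ
  let next (s : X × ℕ) (c : Bool) : X × ℕ :=
    (if c then s.1 * ε s.2 s.1 else s.1, max (s.2 + 1) (m (φ s.2 s.1)))
  let s (b : ℕ → Bool) (l : ℕ) : X × ℕ := Nat.rec (1, 0) (fun l t => next t (b l)) l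
  have hs (b l) : s b (l + 1) = next (s b l) (b l) := rfl
  have hlt (b l) : (s b l).2 < (s b (l + 1)).2 := by
    rw [hs]
    exact Nat.lt_of_succ_le (le_max_left _ _)
  have hmono (b) : StrictMono fun l => (s b l).2 := strictMono_nat_of_lt_succ (hlt b)
  have hstep (b) (l) : ((s b l).1)⁻¹ * (s b (l + 1)).1 ∈ U (s b l).2 := by
    rw [hs]
    simp only [next]
    split_ifs
    · simpa using hε _ _
    · simp
  have hcauchy (b l L) (hL : l ≤ L) : ((s b l).1)⁻¹ * (s b L).1 ∈ U (s b l).2 := by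
    induction L, hL using Nat.le_induction with
    | base => simp
    | succ L hL ih =>
      have := mul_mem ih (hU ((hmono b).monotone hL) (hstep b L))
      simpa [mul_assoc] using this
  choose p hpT hp using fun b => hlim (fun l => (s b l).1) fun l L hL =>
    hU ((hmono b).id_le l) (hcauchy b l L hL)
  refine ⟨fun b => ⟨p b, hpT b⟩, fun b b' hbb => ?_⟩
  replace hbb : p b = p b' := congrArg Subtype.val hbb
  by_contra hne'
  have hex : ∃ l, b l ≠ b' l := Function.ne_iff.1 hne'
  set l := Nat.find hex with hl
  have hprefix (k : ℕ) (hk : k ≤ l) : s b k = s b' k := by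
    induction k with
    | zero => rfl
    | succ k ih =>
      rw [hs, hs, ih (Nat.le_of_succ_le hk), not_not.1 (Nat.find_min hex (Nat.lt_of_succ_le hk))]
  set t := s b l with ht
  have ht' : s b' l = t := (hprefix l le_rfl).symm
  have hval (c : ℕ → Bool) (hc : s c l = t) :
      φ t.2 t.1 ∈ p c ↔ φ t.2 t.1 ∈ P (next t (c l)).1 := by
    obtain ⟨L, hL, hlL⟩ := ((hp c (φ t.2 t.1)).and (eventually_ge_atTop (l + 1))).exists
    have hle : m (φ t.2 t.1) ≤ (s c (l + 1)).2 := by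
      rw [hs, hc]
      exact le_max_right _ _
    have := hm (φ t.2 t.1) (s c (l + 1)).1 _ (hU hle (hcauchy c (l + 1) L hlL))
    rw [mul_inv_cancel_left] at this
    rw [hL, this, hs, hc]
  have h1 := hval b ht.symm
  have h2 := hval b' ht'
  rw [hbb, h2] at h1
  have hbl : b l ≠ b' l := Nat.find_spec hex
  apply hφ t.2 t.1
  rcases hb : b l with _ | _ <;> rcases hb' : b' l with _ | _ <;>
    simp only [hb, hb', ne_eq, not_true_eq_false] at hbl <;>
    simp only [hb, hb', next, if_true, Bool.false_eq_true, if_false] at h1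
  · exact h1
  · exact h1.symm

instance : Countable GQ := by
  have : Countable (Matrix (Fin 2) (Fin 2) ℚ) := inferInstanceAs (Countable (Fin 2 → Fin 2 → ℚ))
  have : Countable (GL (Fin 2) ℚ) := Units.val_injective.countable
  have : Countable GL2QPos := Subtype.countable
  exact Quotient.countable

instance : Countable JLang.Symbols := by
  have hfun : Countable (Σ l, JFun l) := by
    let e : (Σ l, JFun l) → GQ ⊕ Fin 5 := fun F => match F with
      | ⟨_, .act g⟩ => Sum.inl g
      | ⟨_, .jmap⟩ => Sum.inr 0
      | ⟨_, .add⟩ => Sum.inr 1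
      | ⟨_, .mul⟩ => Sum.inr 2
      | ⟨_, .zero⟩ => Sum.inr 3
      | ⟨_, .one⟩ => Sum.inr 4
    refine Function.Injective.countable (f := e) ?_
    rintro ⟨_, _ | _⟩ ⟨_, _ | _⟩ h <;> simp_all [e]
  have hrel : Countable (Σ l, JRel l) := by
    have : Subsingleton (Σ l, JRel l) := ⟨by rintro ⟨_, ⟨⟩⟩ ⟨_, ⟨⟩⟩; rfl⟩
    infer_instance
  exact inferInstanceAs (Countable ((Σ l, JFun l) ⊕ (Σ l, JRel l)))

lemma mk_le_continuum_of_sets_of_formulas {n : ℕ} (T : Set (Set (JLang.Formula (Fin n)))) :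
    Cardinal.mk T ≤ Cardinal.continuum := by
  refine (Cardinal.mk_set_le T).trans ?_
  rw [Cardinal.mk_set, ← Cardinal.two_power_aleph0]
  exact Cardinal.power_le_power_left two_ne_zero (Cardinal.mk_le_aleph0_iff.2 inferInstance)

lemma isFree_of_gIndependent {n : ℕ} {τ : Fin n → ℍ}
    (hτ : stdModel.GIndependent (show Fin n → stdModel.H from τ)) : IsFree τ := by
  intro i k g h
  by_cases hik : i = k
  · subst hik
    refine ⟨rfl, ?_⟩
    by_contra hg
    exact hτ.1 i ⟨g, hg, h⟩
  · exact (hτ.2 i k hik ⟨g, h⟩).elim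

end JPaper

open JPaper FirstOrder

/-- Proposition `number types`: for a `G`-independent tuple
`τ̄ ∈ ℍⁿ`, the number of types of tuples `τ̄'`, realisable in models of
`Th(j) + StandardFibres` and satisfying `j'(τ̄') = j(τ̄)`, is either finite or exactly
`2^ℵ₀`. -/
theorem number_of_types_above_fibre_finite_or_continuum
    (n : ℕ) (τ : Fin n → UpperHalfPlane)
    (hτ : stdModel.GIndependent (show Fin n → stdModel.H from τ)) :
    (typesAboveFibre (fun i => jFunction (τ i))).Finite ∨
      Cardinal.mk ↥(typesAboveFibre (fun i => jFunction (τ i))) = Cardinal.continuum := by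
  have hfree := isFree_of_gIndependent hτ
  by_cases hfin : (Set.range (translateType τ)).Finite
  · exact Or.inl (hfin.subset (typesAboveFibre_subset hfin))
  · right
    obtain ⟨F, hF⟩ := exists_injective_of_splitting (level_antitone n)
      (fun _ hγ => exists_mem_typesAboveFibre hfree hγ) (mem_translateType_mul_iff hfree)
      fun m γ => by
        by_contra! h
        exact hfin (finite_range_translateType h)
    refine le_antisymm (mk_le_continuum_of_sets_of_formulas _) ?_
    calc Cardinal.continuum = Cardinal.mk (ℕ → Bool) := by simp
      _ ≤ _ := Cardinal.mk_le_of_injective hF
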